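/- arXiv:2508.00770 — 10 statements merged into one kernel-verified Lean document; each statement's English description precedes it below -/
import Mathlib

section
/- Let 𝒳 and ℬ be standard Borel spaces, P a Borel probability measure on 𝒳, ℓ : ℬ → (0,∞) a Borel measurable function, and δ : 𝒳 × ℬ → [0,1] jointly Borel measurable. Then the function x ↦ sup_{b∈ℬ} ℓ(b)δ(x,b) is P-measurable (measurable with respect to the P-completion), and if ∫ sup_{b∈ℬ} ℓ(b)δ(x,b) dP(x) is finite, then ∫ sup_{b∈ℬ} ℓ(b)δ(x,b) dP(x) = sup_B ∫ ℓ(B(x))·δ(x,B(x)) dP(x), where the supremum on the right is over all Borel measurable maps B : 𝒳 → ℬ. -/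
open MeasureTheory
open scoped ENNReal

lemma aux_compact {X : Type*} [TopologicalSpace X] [PolishSpace X] [MeasurableSpace X]
    [BorelSpace X] (P : Measure X) [IsFiniteMeasure P] (f : (ℕ → ℕ) → X) (hf : Continuous f)
    (c : ℝ≥0∞) (hc : c < P (Set.range f)) :
    ∃ T : Set X, MeasurableSet T ∧ T ⊆ Set.range f ∧ c ≤ P T := by
  let _ := TopologicalSpace.upgradeIsCompletelyMetrizable X
  have step : ∀ (C : Set (ℕ → ℕ)) (k : ℕ), ∃ m : ℕ, c < P (f '' C) →
      c < P (f '' (C ∩ {y | y k ≤ m})) := by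
    intro C k
    by_cases h : c < P (f '' C)
    · have hU : f '' C = ⋃ m : ℕ, f '' (C ∩ {y | y k ≤ m}) := by
        rw [← Set.image_iUnion, ← Set.inter_iUnion]
        congr 1
        ext y
        simp only [Set.mem_inter_iff, Set.mem_iUnion, Set.mem_ofPred_eq]
        exact ⟨fun hy => ⟨hy, y k, le_rfl⟩, fun hy => hy.1⟩
      have hmono : Monotone fun m : ℕ => f '' (C ∩ {y | y k ≤ m}) := by
        intro a b hab
        apply Set.image_mono
        exact Set.inter_subset_inter_right _ fun y (hy : y k ≤ a) => hy.trans hab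
      rw [hU, hmono.measure_iUnion] at h
      obtain ⟨m, hm⟩ := lt_iSup_iff.1 h
      exact ⟨m, fun _ => hm⟩
    · exact ⟨0, fun h' => absurd h' h⟩
  choose m hm using step
  let D : ℕ → Set (ℕ → ℕ) := fun k =>
    Nat.rec Set.univ (fun k C => C ∩ {y | y k ≤ m C k}) k
  have hDs : ∀ k, D (k+1) = D k ∩ {y | y k ≤ m (D k) k} := fun k => rfl
  let n : ℕ → ℕ := fun k => m (D k) k
  have hD : ∀ k y, y ∈ D k ↔ ∀ i < k, y i ≤ n i := by
    intro k y
    induction k with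
    | zero => simp [D]
    | succ k ih =>
      rw [hDs, Set.mem_inter_iff, ih]
      constructor
      · rintro ⟨h1, h2⟩ i hi
        rcases Nat.lt_succ_iff_lt_or_eq.1 hi with h | rfl
        · exact h1 i h
        · exact h2
      · intro h
        exact ⟨fun i hi => h i (by omega), h k (by omega)⟩
  have hDc : ∀ k, c < P (f '' D k) := by
    intro k
    induction k with
    | zero => simpa [D] using hc
    | succ k ih => rw [hDs]; exact hm _ _ ih
  have hDanti : Antitone D := by
    intro a b hab y hy
    rw [hD] at hy ⊢
    exact fun i hi => hy i (by omega)
  refine ⟨⋂ k, closure (f '' D k), MeasurableSet.iInter fun k => isClosed_closure.measurableSet,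
    ?_, ?_⟩
  · intro x hx
    rw [Set.mem_iInter] at hx
    have : ∀ k : ℕ, ∃ y ∈ D k, dist x (f y) < 1 / ((k : ℝ) + 1) := by
      intro k
      obtain ⟨_, ⟨y, hy, rfl⟩, h⟩ := Metric.mem_closure_iff.1 (hx k) (1 / ((k : ℝ) + 1))
        (by positivity)
      exact ⟨y, hy, h⟩
    choose y hyD hyx using this
    have hK : IsCompact (Set.pi Set.univ fun i => Set.Iic (n i)) :=
      isCompact_univ_pi fun i => (Set.finite_Iic (n i)).isCompact
    obtain ⟨z, -, φ, hφ, hz⟩ := hK.tendsto_subseq (x := fun k i => min (y k i) (n i))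
      (fun k i _ => Set.mem_Iic.2 (min_le_right _ _))
    have hyz : Filter.Tendsto (fun k => y (φ k)) Filter.atTop (nhds z) := by
      rw [tendsto_pi_nhds] at hz ⊢
      intro i
      refine (hz i).congr' ?_
      filter_upwards [Filter.eventually_gt_atTop i] with k hk
      exact min_eq_left ((hD _ _).1 (hyD (φ k)) i (lt_of_lt_of_le hk (hφ.id_le k)))
    have h1 : Filter.Tendsto (fun k => f (y k)) Filter.atTop (nhds x) := by
      rw [tendsto_iff_dist_tendsto_zero]
      refine squeeze_zero (fun _ => dist_nonneg) (fun k => ?_) tendsto_one_div_add_atTop_nhds_zero_nat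
      rw [dist_comm]; exact (hyx k).le
    exact ⟨z, tendsto_nhds_unique ((hf.tendsto z).comp hyz) (h1.comp hφ.tendsto_atTop)⟩
  · have hanti : Antitone fun k => closure (f '' D k) :=
      fun a b hab => closure_mono (Set.image_mono (hDanti hab))
    rw [hanti.measure_iInter (fun k => isClosed_closure.measurableSet.nullMeasurableSet)
      ⟨0, measure_ne_top _ _⟩]
    exact le_iInf fun k => (hDc k).le.trans (measure_mono subset_closure)

lemma aux_analytic {X : Type*} [TopologicalSpace X] [PolishSpace X] [MeasurableSpace X]
    [BorelSpace X] (P : Measure X) [IsFiniteMeasure P] {S : Set X} (hS : AnalyticSet S) :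
    NullMeasurableSet S P := by
  rw [AnalyticSet] at hS
  rcases hS with rfl | ⟨f, hf, rfl⟩
  · exact MeasurableSet.empty.nullMeasurableSet
  have : ∀ q : ℚ, ∃ T : Set X, MeasurableSet T ∧ T ⊆ Set.range f ∧
      (((Real.toNNReal q : NNReal) : ℝ≥0∞) < P (Set.range f) →
        ((Real.toNNReal q : NNReal) : ℝ≥0∞) ≤ P T) := by
    intro q
    by_cases h : ((Real.toNNReal q : NNReal) : ℝ≥0∞) < P (Set.range f)
    · obtain ⟨T, h1, h2, h3⟩ := aux_compact P f hf _ h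
      exact ⟨T, h1, h2, fun _ => h3⟩
    · exact ⟨∅, MeasurableSet.empty, Set.empty_subset _, fun h' => absurd h' h⟩
  choose T hTm hTs hTc using this
  have hm : MeasurableSet (⋃ q, T q) := MeasurableSet.iUnion hTm
  refine NullMeasurableSet.congr hm.nullMeasurableSet
    (ae_eq_of_subset_of_measure_ge (Set.iUnion_subset hTs) ?_ hm.nullMeasurableSet
      (measure_ne_top _ _))
  by_contra! hlt
  obtain ⟨q, -, h1, h2⟩ := ENNReal.lt_iff_exists_rat_btwn.1 hlt
  exact absurd (h1.trans_le ((hTc q h2).trans (measure_mono (Set.subset_iUnion T q)))) (lt_irrefl _)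

lemma aux_section {X : Type*} [TopologicalSpace X] [PolishSpace X] [MeasurableSpace X]
    [BorelSpace X] (P : Measure X) [IsFiniteMeasure P] (f : (ℕ → ℕ) → X) (hf : Continuous f) :
    ∃ σ : X → (ℕ → ℕ), Measurable σ ∧ ∀ᵐ x ∂P, x ∈ Set.range f → f (σ x) = x := by
  let A : List ℕ → Set X := fun l => f '' {y | PiNat.res y l.length = l}
  have hA : ∀ l, NullMeasurableSet (A l) P := by
    intro l
    apply aux_analytic
    refine IsOpen.analyticSet_image ?_ hf
    rw [isOpen_iff_forall_mem_open]
    intro y hy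
    refine ⟨PiNat.cylinder y l.length, ?_, PiNat.isOpen_cylinder _ _ _, PiNat.self_mem_cylinder _ _⟩
    rw [PiNat.cylinder_eq_res]
    intro z hz
    exact Eq.trans hz hy
  let m : X → List ℕ → ℕ := fun x l => sInf {k | x ∈ A (k :: l)}
  let L : ℕ → X → List ℕ := fun n x => Nat.rec [] (fun _ l => m x l :: l) n
  have hLs : ∀ n x, L (n+1) x = m x (L n x) :: L n x := fun n x => rfl
  have hm : ∀ l k, NullMeasurableSet {x | m x l = k} P := by
    intro l k
    have : {x | m x l = k} = (A (k :: l) ∩ ⋂ j : {j // j < k}, (A (j.1 :: l))ᶜ) ∪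
        ({_x : X | k = 0} ∩ ⋂ j, (A (j :: l))ᶜ) := by
      ext x
      simp only [Set.mem_ofPred_eq, Set.mem_union, Set.mem_inter_iff, Set.mem_iInter,
        Set.mem_compl_iff, Subtype.forall, m]
      constructor
      · rintro rfl
        by_cases hne : {k | x ∈ A (k :: l)}.Nonempty
        · exact Or.inl ⟨Nat.sInf_mem hne, fun j hj => Nat.notMem_of_lt_sInf hj⟩
        · rw [Set.not_nonempty_iff_eq_empty] at hne
          refine Or.inr ⟨by rw [hne]; simp, fun j hj => ?_⟩
          have : j ∈ {k | x ∈ A (k :: l)} := hj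
          rw [hne] at this
          exact this
      · rintro (⟨h1, h2⟩ | ⟨rfl, h2⟩)
        · apply le_antisymm (Nat.sInf_le h1)
          by_contra! hlt
          exact h2 _ hlt (Nat.sInf_mem (s := {k | x ∈ A (k :: l)}) ⟨k, h1⟩)
        · have : {k | x ∈ A (k :: l)} = ∅ := by
            ext j; simpa using h2 j
          rw [this]; simp
    rw [this]
    refine ((hA _).inter (NullMeasurableSet.iInter fun j => (hA _).compl)).union
      (NullMeasurableSet.inter ?_ (NullMeasurableSet.iInter fun j => (hA _).compl))
    exact (MeasurableSet.const _).nullMeasurableSet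
  have hL : ∀ n l, NullMeasurableSet {x | L n x = l} P := by
    intro n
    induction n with
    | zero => intro l; exact (MeasurableSet.const ([] = l)).nullMeasurableSet
    | succ n ih =>
      intro l
      cases l with
      | nil => simp [hLs]
      | cons k l =>
        have : {x | L (n+1) x = k :: l} = {x | m x l = k} ∩ {x | L n x = l} := by
          ext x
          simp only [hLs, Set.mem_ofPred_eq, List.cons.injEq, Set.mem_inter_iff]
          constructor
          · rintro ⟨h1, h2⟩; rw [h2] at h1; exact ⟨h1, h2⟩
          · rintro ⟨h1, h2⟩; rw [h2]; exact ⟨h1, rfl⟩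
        rw [this]
        exact (hm _ _).inter (ih _)
  let τ : X → (ℕ → ℕ) := fun x n => m x (L n x)
  have hτ : AEMeasurable τ P := by
    rw [aemeasurable_pi_iff]
    intro n
    apply NullMeasurable.aemeasurable
    intro s _
    have : (fun x => τ x n) ⁻¹' s = ⋃ k : s, ⋃ l, {x | m x l = k.1} ∩ {x | L n x = l} := by
      ext x
      simp only [Set.mem_preimage, Set.mem_iUnion, Set.mem_inter_iff, Set.mem_ofPred_eq, τ]
      constructor
      · intro h; exact ⟨⟨_, h⟩, _, rfl, rfl⟩
      · rintro ⟨⟨k, hk⟩, l, h1, h2⟩; rw [h2, h1]; exact hk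
    rw [this]
    exact NullMeasurableSet.iUnion fun k => NullMeasurableSet.iUnion fun l => (hm _ _).inter (hL _ _)
  have hres : ∀ x n, PiNat.res (τ x) n = L n x := by
    intro x n
    induction n with
    | zero => rfl
    | succ n ih => rw [PiNat.res_succ, ih]
  have hτf : ∀ x ∈ Set.range f, f (τ x) = x := by
    intro x hx
    have hlen : ∀ n, (L n x).length = n := fun n => by rw [← hres]; exact PiNat.res_length _ _
    have hmem : ∀ n, x ∈ A (L n x) := by
      intro n
      induction n with
      | zero =>
        obtain ⟨y, rfl⟩ := hx
        exact ⟨y, rfl, rfl⟩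
      | succ n ih =>
        rw [hLs]
        refine Nat.sInf_mem (s := {k | x ∈ A (k :: L n x)}) ?_
        obtain ⟨y, hy, hyx⟩ := ih
        refine ⟨y (L n x).length, y, ?_, hyx⟩
        simp only [Set.mem_ofPred_eq] at hy
        simp [PiNat.res_succ, hy]
    choose y hy hyx using hmem
    have hlim : Filter.Tendsto y Filter.atTop (nhds (τ x)) := by
      rw [tendsto_pi_nhds]
      intro i
      refine tendsto_const_nhds.congr' ?_
      filter_upwards [Filter.eventually_gt_atTop i] with n hn
      have h := hy n
      rw [Set.mem_ofPred_eq, hlen, ← hres] at h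
      exact (PiNat.res_eq_res.1 h hn).symm
    have h2 := (hf.tendsto _).comp hlim
    have h3 : f ∘ y = fun _ => x := funext hyx
    rw [h3] at h2
    exact tendsto_nhds_unique h2 tendsto_const_nhds
  refine ⟨hτ.mk τ, hτ.measurable_mk, ?_⟩
  filter_upwards [hτ.ae_eq_mk] with x hx hxr
  rw [← hx]; exact hτf x hxr

lemma aux_proj {X Y : Type*} [MeasurableSpace X] [StandardBorelSpace X]
    [MeasurableSpace Y] [StandardBorelSpace Y] (P : Measure X) [IsFiniteMeasure P]
    {A : Set (X × Y)} (hA : MeasurableSet A) : NullMeasurableSet (Prod.fst '' A) P := by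
  let _ := upgradeStandardBorel X
  let _ := upgradeStandardBorel Y
  exact aux_analytic P (hA.analyticSet.image_of_continuous continuous_fst)

lemma aux_select {X Y : Type*} [MeasurableSpace X] [StandardBorelSpace X]
    [MeasurableSpace Y] [StandardBorelSpace Y] [Nonempty Y] (P : Measure X) [IsFiniteMeasure P]
    {A : Set (X × Y)} (hA : MeasurableSet A) (h : ∀ᵐ x ∂P, ∃ y, (x, y) ∈ A) :
    ∃ B : X → Y, Measurable B ∧ ∀ᵐ x ∂P, (x, B x) ∈ A := by
  let _ := upgradeStandardBorel X
  let _ := upgradeStandardBorel Y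
  have hA' := hA.analyticSet
  rw [AnalyticSet] at hA'
  rcases hA' with rfl | ⟨g, hg, rfl⟩
  · refine ⟨fun _ => Classical.arbitrary Y, measurable_const, ?_⟩
    filter_upwards [h] with x hx
    obtain ⟨y, hy⟩ := hx
    exact hy.elim
  · obtain ⟨σ, hσ, hσf⟩ := aux_section P (fun z => (g z).1) (continuous_fst.comp hg)
    refine ⟨fun x => (g (σ x)).2, (measurable_snd.comp hg.measurable).comp hσ, ?_⟩
    filter_upwards [h, hσf] with x hx hx'
    obtain ⟨y, z, hz⟩ := hx
    have := hx' ⟨z, by simp [hz]⟩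
    exact ⟨σ x, Prod.ext this rfl⟩

/-- for standard Borel spaces `𝒳`, `ℬ`, a Borel probability measure `P` on
`𝒳`, a measurable positive loss `ℓ : ℬ → (0,∞)`, and a jointly measurable
`δ : 𝒳 × ℬ → [0,1]`, the function `x ↦ sup_{b∈ℬ} ℓ(b) δ(x,b)` is measurable with
respect to the `P`-completion, and if its integral is finite then it equals the
supremum, over all Borel measurable maps `B : 𝒳 → ℬ`, of
`∫ ℓ(B(x)) δ(x, B(x)) dP(x)`. -/
theorem stmt0 {𝒳 ℬ : Type*}
    [MeasurableSpace 𝒳] [StandardBorelSpace 𝒳]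
    [MeasurableSpace ℬ] [StandardBorelSpace ℬ] [Nonempty ℬ]
    (P : Measure 𝒳) [IsProbabilityMeasure P]
    (ℓ : ℬ → ℝ) (hℓmeas : Measurable ℓ) (hℓpos : ∀ b, 0 < ℓ b)
    (δ : 𝒳 × ℬ → ℝ) (hδmeas : Measurable δ)
    (hδ01 : ∀ p, δ p ∈ Set.Icc (0 : ℝ) 1) :
    NullMeasurable (fun x => ⨆ b, ENNReal.ofReal (ℓ b * δ (x, b))) P ∧
    ((∫⁻ x, (⨆ b, ENNReal.ofReal (ℓ b * δ (x, b))) ∂P) ≠ ∞ →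
      (∫⁻ x, (⨆ b, ENNReal.ofReal (ℓ b * δ (x, b))) ∂P) =
        ⨆ B : {B : 𝒳 → ℬ // Measurable B},
          ∫⁻ x, ENNReal.ofReal (ℓ (B.1 x) * δ (x, B.1 x)) ∂P) := by
  have hF : Measurable fun p : 𝒳 × ℬ => ENNReal.ofReal (ℓ p.2 * δ p) :=
    ((hℓmeas.comp measurable_snd).mul hδmeas).ennreal_ofReal
  have hnull : NullMeasurable (fun x => ⨆ b, ENNReal.ofReal (ℓ b * δ (x, b))) P := by
    refine measurable_of_Ioi (δ := NullMeasurableSpace 𝒳 P) fun a => ?_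
    have : (fun x => ⨆ b, ENNReal.ofReal (ℓ b * δ (x, b))) ⁻¹' Set.Ioi a =
        Prod.fst '' ((fun p : 𝒳 × ℬ => ENNReal.ofReal (ℓ p.2 * δ p)) ⁻¹' Set.Ioi a) := by
      ext x
      simp [lt_iSup_iff]
    have h2 : NullMeasurableSet ((fun x => ⨆ b, ENNReal.ofReal (ℓ b * δ (x, b))) ⁻¹' Set.Ioi a) P := by
      rw [this]
      exact aux_proj P (hF measurableSet_Ioi)
    exact h2
  refine ⟨hnull, fun hfin => le_antisymm ?_ ?_⟩
  · have hae := hnull.aemeasurable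
    refine ENNReal.le_of_forall_pos_le_add fun ε hε _ => ?_
    have hlt := ae_lt_top' hae hfin
    have hA : MeasurableSet {p : 𝒳 × ℬ | hae.mk _ p.1 ≤ ENNReal.ofReal (ℓ p.2 * δ p) + ε} :=
      measurableSet_le (hae.measurable_mk.comp measurable_fst) (hF.add_const _)
    obtain ⟨B, hB, hBA⟩ := aux_select P hA (by
      filter_upwards [hlt, hae.ae_eq_mk] with x hx hx'
      change ∃ b, hae.mk _ x ≤ ENNReal.ofReal (ℓ b * δ (x, b)) + ε
      rw [← hx']
      by_contra! hcon
      have h1 : (⨆ b, ENNReal.ofReal (ℓ b * δ (x, b))) + (ε : ℝ≥0∞) ≤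
          ⨆ b, ENNReal.ofReal (ℓ b * δ (x, b)) := by
        rw [ENNReal.iSup_add]
        exact iSup_le fun b => (hcon b).le
      exact absurd h1 (not_le.2 (ENNReal.lt_add_right hx.ne (by exact_mod_cast hε.ne'))))
    calc (∫⁻ x, (⨆ b, ENNReal.ofReal (ℓ b * δ (x, b))) ∂P)
        ≤ ∫⁻ x, (ENNReal.ofReal (ℓ (B x) * δ (x, B x)) + ε) ∂P := by
          refine lintegral_mono_ae ?_
          filter_upwards [hBA, hae.ae_eq_mk] with x hx hx'
          rw [hx']
          exact hx
      _ = (∫⁻ x, ENNReal.ofReal (ℓ (B x) * δ (x, B x)) ∂P) + ε := by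
          rw [lintegral_add_right _ measurable_const]; simp
      _ ≤ _ := by
          gcongr
          exact le_iSup (fun B : {B : 𝒳 → ℬ // Measurable B} =>
            ∫⁻ x, ENNReal.ofReal (ℓ (B.1 x) * δ (x, B.1 x)) ∂P) ⟨B, hB⟩
  · exact iSup_le fun B => lintegral_mono fun x =>
      le_iSup (fun b => ENNReal.ofReal (ℓ b * δ (x, b))) (B.1 x)
end

section
/- Let Γ be any set of adversaries containing all constant maps and let δ be a Γ-admissible test family. Then for all b₁, b₂ ∈ ℬ with b₁ ≤ b₂, δ(x,b₁) ≥ δ(x,b₂) for P-almost every x. The same holds for Γ-admissible binary test families. -/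
open MeasureTheory
open scoped ENNReal

namespace PostHocTesting

variable {𝒳 : Type*} [MeasurableSpace 𝒳]

/-- The e-value associated to a test family `δ`:
`E_δ(x) = sup_{b ∈ ℬ} ℓ(b) · δ(x,b)`, valued in `ℝ≥0∞`. -/
noncomputable def Esup (ℬ : Set ℝ) (ℓ : ℝ → ℝ) (δ : 𝒳 → ℝ → ℝ) (x : 𝒳) : ℝ≥0∞ :=
  ⨆ b : ℬ, ENNReal.ofReal (ℓ (b : ℝ) * δ x (b : ℝ))

/-- A (randomized) test family: jointly measurable, `[0,1]`-valued on scenarios,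
with measurable associated e-value. -/
def IsTestFamily (ℬ : Set ℝ) (ℓ : ℝ → ℝ) (δ : 𝒳 → ℝ → ℝ) : Prop :=
  Measurable (fun p : 𝒳 × ℝ => δ p.1 p.2) ∧
  (∀ x : 𝒳, ∀ b ∈ ℬ, δ x b ∈ Set.Icc (0 : ℝ) 1) ∧
  Measurable (Esup ℬ ℓ δ)

/-- A binary test family takes only the values 0 and 1. -/
def IsBinaryTestFamily (ℬ : Set ℝ) (ℓ : ℝ → ℝ) (δ : 𝒳 → ℝ → ℝ) : Prop :=
  IsTestFamily ℬ ℓ δ ∧ ∀ x : 𝒳, ∀ b ∈ ℬ, δ x b = 0 ∨ δ x b = 1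

/-- Type-I risk `R_P(δ) = ∫ sup_{b∈ℬ} ℓ(b) δ(x,b) dP(x)`. -/
noncomputable def typeIRisk (P : Measure 𝒳) (ℬ : Set ℝ) (ℓ : ℝ → ℝ)
    (δ : 𝒳 → ℝ → ℝ) : ℝ≥0∞ :=
  ∫⁻ x, Esup ℬ ℓ δ x ∂P

/-- `δ` is type-I risk safe if `R_P(δ) ≤ 1`. -/
def RiskSafe (P : Measure 𝒳) (ℬ : Set ℝ) (ℓ : ℝ → ℝ) (δ : 𝒳 → ℝ → ℝ) : Prop :=
  typeIRisk P ℬ ℓ δ ≤ 1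

/-- Type-II risk of `δ` against the adversary `B`:
`∫ m(B(x)) (1 - δ(x, B(x))) dQ(x)`. -/
noncomputable def typeIIRisk (Q : Measure 𝒳) (m : ℝ → ℝ) (δ : 𝒳 → ℝ → ℝ)
    (B : 𝒳 → ℝ) : ℝ≥0∞ :=
  ∫⁻ x, ENNReal.ofReal (m (B x) * (1 - δ x (B x))) ∂Q

/-- The set `𝐂` of constant adversaries. -/
def ConstAdv (𝒳 : Type*) (ℬ : Set ℝ) : Set (𝒳 → ℝ) :=
  {B | ∃ b ∈ ℬ, B = fun _ => b}

/-- The set `𝐔` of all measurable adversaries. -/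
def AllAdv (𝒳 : Type*) [MeasurableSpace 𝒳] (ℬ : Set ℝ) : Set (𝒳 → ℝ) :=
  {B | Measurable B ∧ ∀ x, B x ∈ ℬ}

/-- `φ` is strictly preferable to `δ` relative to the adversary class `Γ`. -/
def StrictlyPreferable (P Q : Measure 𝒳) (ℬ : Set ℝ) (ℓ m : ℝ → ℝ)
    (Γ : Set (𝒳 → ℝ)) (φ δ : 𝒳 → ℝ → ℝ) : Prop :=
  RiskSafe P ℬ ℓ φ ∧
  (∀ B ∈ Γ, typeIIRisk Q m φ B ≤ typeIIRisk Q m δ B) ∧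
  (∃ B ∈ Γ, typeIIRisk Q m φ B < typeIIRisk Q m δ B)

/-- `Γ`-admissibility among randomized test families. -/
def Admissible (P Q : Measure 𝒳) (ℬ : Set ℝ) (ℓ m : ℝ → ℝ)
    (Γ : Set (𝒳 → ℝ)) (δ : 𝒳 → ℝ → ℝ) : Prop :=
  RiskSafe P ℬ ℓ δ ∧
  ∀ φ : 𝒳 → ℝ → ℝ, IsTestFamily ℬ ℓ φ → ¬ StrictlyPreferable P Q ℬ ℓ m Γ φ δ

/-- `Γ`-admissibility among binary test families. -/
def AdmissibleBinary (P Q : Measure 𝒳) (ℬ : Set ℝ) (ℓ m : ℝ → ℝ)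
    (Γ : Set (𝒳 → ℝ)) (δ : 𝒳 → ℝ → ℝ) : Prop :=
  RiskSafe P ℬ ℓ δ ∧
  ∀ φ : 𝒳 → ℝ → ℝ, IsBinaryTestFamily ℬ ℓ φ → ¬ StrictlyPreferable P Q ℬ ℓ m Γ φ δ

/-- Likelihood ratio `Λ = dQ/dP`. -/
noncomputable def LR (P Q : Measure 𝒳) (x : 𝒳) : ℝ := (Q.rnDeriv P x).toReal

/-- `P` and `Q` are continuous: the distribution of `Λ` under `P` is atomless. -/
def AtomlessLR (P Q : Measure 𝒳) : Prop := ∀ c : ℝ, P {x | LR P Q x = c} = 0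

/-- Raise the test at scenario `b₁` to at least its value at scenario `b₂`. -/
noncomputable def raised (δ : 𝒳 → ℝ → ℝ) (b₁ b₂ : ℝ) (x : 𝒳) (b : ℝ) : ℝ :=
  if b = b₁ then max (δ x b₁) (δ x b₂) else δ x b

lemma le_raised (δ : 𝒳 → ℝ → ℝ) (b₁ b₂ : ℝ) (x : 𝒳) (b : ℝ) :
    δ x b ≤ raised δ b₁ b₂ x b := by
  unfold raised
  split_ifs with h
  · subst h; exact le_max_left _ _
  · exact le_rfl

lemma Esup_raised (ℬ : Set ℝ) (ℓ : ℝ → ℝ) (hℓpos : ∀ b ∈ ℬ, 0 < ℓ b)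
    (δ : 𝒳 → ℝ → ℝ) (h01 : ∀ x : 𝒳, ∀ b ∈ ℬ, δ x b ∈ Set.Icc (0 : ℝ) 1)
    (b₁ b₂ : ℝ) (hb₂ : b₂ ∈ ℬ) (hl : ℓ b₁ ≤ ℓ b₂) :
    Esup ℬ ℓ (raised δ b₁ b₂) = Esup ℬ ℓ δ := by
  funext x
  apply le_antisymm
  · refine iSup_le fun b => ?_
    by_cases h : (b : ℝ) = b₁
    · rcases le_total (δ x b₁) (δ x b₂) with h' | h'
      · refine le_trans (ENNReal.ofReal_le_ofReal ?_)
          (le_iSup (fun b : ℬ => ENNReal.ofReal (ℓ (b : ℝ) * δ x (b : ℝ))) ⟨b₂, hb₂⟩)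
        simp only [raised, h, if_true, max_eq_right h']
        exact mul_le_mul_of_nonneg_right hl (h01 x b₂ hb₂).1
      · refine le_trans (ENNReal.ofReal_le_ofReal ?_)
          (le_iSup (fun b : ℬ => ENNReal.ofReal (ℓ (b : ℝ) * δ x (b : ℝ))) b)
        simp only [raised, h, if_true, max_eq_left h', le_refl]
    · refine le_trans (ENNReal.ofReal_le_ofReal ?_)
        (le_iSup (fun b : ℬ => ENNReal.ofReal (ℓ (b : ℝ) * δ x (b : ℝ))) b)
      simp only [raised, h, if_false, le_refl]
  · refine iSup_mono fun b => ENNReal.ofReal_le_ofReal ?_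
    exact mul_le_mul_of_nonneg_left (le_raised δ b₁ b₂ x b) (hℓpos b b.2).le

lemma isTestFamily_raised (ℬ : Set ℝ) (ℓ : ℝ → ℝ) (hℓpos : ∀ b ∈ ℬ, 0 < ℓ b)
    (δ : 𝒳 → ℝ → ℝ) (hδ : IsTestFamily ℬ ℓ δ)
    (b₁ b₂ : ℝ) (hb₁ : b₁ ∈ ℬ) (hb₂ : b₂ ∈ ℬ) (hl : ℓ b₁ ≤ ℓ b₂) :
    IsTestFamily ℬ ℓ (raised δ b₁ b₂) := by
  obtain ⟨h1, h2, h3⟩ := hδ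
  refine ⟨?_, ?_, ?_⟩
  · unfold raised
    refine Measurable.ite (measurable_snd (measurableSet_singleton b₁)) ?_ h1
    have key : ∀ c : ℝ, Measurable fun p : 𝒳 × ℝ => δ p.1 c := fun c =>
      h1.comp (measurable_fst.prodMk measurable_const)
    exact (key b₁).max (key b₂)
  · intro x b hb
    unfold raised
    split_ifs
    · exact ⟨le_max_of_le_left (h2 x b₁ hb₁).1, max_le (h2 x b₁ hb₁).2 (h2 x b₂ hb₂).2⟩
    · exact h2 x b hb
  · rw [Esup_raised ℬ ℓ hℓpos δ h2 b₁ b₂ hb₂ hl]; exact h3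

lemma main_aux (P Q : Measure 𝒳) [IsProbabilityMeasure Q]
    (hPQ : P ≪ Q) (ℬ : Set ℝ)
    (ℓ : ℝ → ℝ) (hℓpos : ∀ b ∈ ℬ, 0 < ℓ b)
    (m : ℝ → ℝ) (hm : ∀ b ∈ ℬ, 0 < m b)
    (Γ : Set (𝒳 → ℝ)) (hΓ : ConstAdv 𝒳 ℬ ⊆ Γ)
    (δ : 𝒳 → ℝ → ℝ) (hδ : IsTestFamily ℬ ℓ δ) (hs : RiskSafe P ℬ ℓ δ)
    (b₁ b₂ : ℝ) (hb₁ : b₁ ∈ ℬ) (hb₂ : b₂ ∈ ℬ) (hl : ℓ b₁ ≤ ℓ b₂)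
    (hnot : ¬ StrictlyPreferable P Q ℬ ℓ m Γ (raised δ b₁ b₂) δ) :
    ∀ᵐ x ∂P, δ x b₂ ≤ δ x b₁ := by
  have hφ := isTestFamily_raised ℬ ℓ hℓpos δ hδ b₁ b₂ hb₁ hb₂ hl
  have hpt : ∀ (x : 𝒳) (b : ℝ), ENNReal.ofReal (m b * (1 - raised δ b₁ b₂ x b))
      ≤ ENNReal.ofReal (m b * (1 - δ x b)) := by
    intro x b
    by_cases h : b = b₁
    · refine ENNReal.ofReal_le_ofReal (mul_le_mul_of_nonneg_left ?_ (hm b (h ▸ hb₁)).le)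
      linarith [le_raised δ b₁ b₂ x b]
    · simp only [raised, h, if_false, le_refl]
  have hle : ∀ B : 𝒳 → ℝ, typeIIRisk Q m (raised δ b₁ b₂) B ≤ typeIIRisk Q m δ B :=
    fun B => lintegral_mono fun x => hpt x (B x)
  have hge : typeIIRisk Q m δ (fun _ => b₁)
      ≤ typeIIRisk Q m (raised δ b₁ b₂) (fun _ => b₁) := by
    by_contra hcon
    refine hnot ⟨?_, fun B _ => hle B, fun _ => b₁, hΓ ⟨b₁, hb₁, rfl⟩, not_le.mp hcon⟩
    unfold RiskSafe typeIRisk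
    rw [Esup_raised ℬ ℓ hℓpos δ hδ.2.1 b₁ b₂ hb₂ hl]
    exact hs
  have hfin : typeIIRisk Q m (raised δ b₁ b₂) (fun _ => b₁) ≠ ∞ := by
    have : typeIIRisk Q m (raised δ b₁ b₂) (fun _ => b₁) ≤ ∫⁻ _, ENNReal.ofReal (m b₁) ∂Q := by
      refine lintegral_mono fun x => ENNReal.ofReal_le_ofReal ?_
      have := (hφ.2.1 x b₁ hb₁).1
      nlinarith [hm b₁ hb₁]
    refine ne_top_of_le_ne_top ?_ this
    simp
  have hmeas : Measurable fun x => ENNReal.ofReal (m b₁ * (1 - δ x b₁)) := by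
    have : Measurable fun x => δ x b₁ := hδ.1.comp (measurable_id.prodMk measurable_const)
    exact ((this.const_sub 1).const_mul _).ennreal_ofReal
  have hae := ae_eq_of_ae_le_of_lintegral_le
    (Filter.Eventually.of_forall fun x => hpt x b₁) hfin hmeas.aemeasurable hge
  refine hPQ.ae_le ?_
  filter_upwards [hae] with x hx
  have e1 := (hφ.2.1 x b₁ hb₁).2
  have e2 := (hδ.2.1 x b₁ hb₁).2
  have hmp := hm b₁ hb₁
  rw [ENNReal.ofReal_eq_ofReal_iff (mul_nonneg hmp.le (by linarith))
    (mul_nonneg hmp.le (by linarith))] at hx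
  have h3 := mul_left_cancel₀ hmp.ne' hx
  have h4 : raised δ b₁ b₂ x b₁ = max (δ x b₁) (δ x b₂) := by simp [raised]
  have h5 := le_max_right (δ x b₁) (δ x b₂)
  linarith

/-- any `Γ`-admissible (randomized or binary) test family is decreasing in the
scenario: for `b₁ ≤ b₂` in `ℬ`, `δ(x,b₁) ≥ δ(x,b₂)` for `P`-a.e. `x`. -/
theorem stmt2
    [StandardBorelSpace 𝒳]
    (P Q : Measure 𝒳) [IsProbabilityMeasure P] [IsProbabilityMeasure Q]
    (hPQ : P ≪ Q) (hQP : Q ≪ P)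
    (ℬ : Set ℝ) (hℬne : ℬ.Nonempty)
    (ℓ : ℝ → ℝ) (hℓmeas : Measurable ℓ) (hℓpos : ∀ b ∈ ℬ, 0 < ℓ b)
    (hℓmono : ∀ b₁ ∈ ℬ, ∀ b₂ ∈ ℬ, b₁ ≤ b₂ → ℓ b₁ ≤ ℓ b₂)
    (hℓgt1 : ∃ b ∈ ℬ, 1 < ℓ b)
    (m : ℝ → ℝ) (hm : ∀ b ∈ ℬ, 0 < m b)
    (Γ : Set (𝒳 → ℝ)) (hΓ : ConstAdv 𝒳 ℬ ⊆ Γ)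
    (δ : 𝒳 → ℝ → ℝ) (hδ : IsTestFamily ℬ ℓ δ) :
    (Admissible P Q ℬ ℓ m Γ δ →
      ∀ b₁ ∈ ℬ, ∀ b₂ ∈ ℬ, b₁ ≤ b₂ → ∀ᵐ x ∂P, δ x b₂ ≤ δ x b₁) ∧
    (IsBinaryTestFamily ℬ ℓ δ → AdmissibleBinary P Q ℬ ℓ m Γ δ →
      ∀ b₁ ∈ ℬ, ∀ b₂ ∈ ℬ, b₁ ≤ b₂ → ∀ᵐ x ∂P, δ x b₂ ≤ δ x b₁) := by
  refine ⟨fun hA b₁ hb₁ b₂ hb₂ h => ?_, fun hbin hA b₁ hb₁ b₂ hb₂ h => ?_⟩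
  · have hl := hℓmono b₁ hb₁ b₂ hb₂ h
    exact main_aux P Q hPQ ℬ ℓ hℓpos m hm Γ hΓ δ hδ hA.1 b₁ b₂ hb₁ hb₂ hl
      (hA.2 _ (isTestFamily_raised ℬ ℓ hℓpos δ hδ b₁ b₂ hb₁ hb₂ hl))
  · have hl := hℓmono b₁ hb₁ b₂ hb₂ h
    refine main_aux P Q hPQ ℬ ℓ hℓpos m hm Γ hΓ δ hδ hA.1 b₁ b₂ hb₁ hb₂ hl
      (hA.2 _ ⟨isTestFamily_raised ℬ ℓ hℓpos δ hδ b₁ b₂ hb₁ hb₂ hl, fun x b hb => ?_⟩)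
    unfold raised
    split_ifs
    · rcases max_choice (δ x b₁) (δ x b₂) with h' | h' <;> rw [h']
      · exact hbin.2 x b₁ hb₁
      · exact hbin.2 x b₂ hb₂
    · exact hbin.2 x b hb

end PostHocTesting
end

section
/- Let Γ be any set of adversaries containing all constant maps, and let φ, δ be two type-I risk safe test families with associated functions E_φ(x) = sup_b ℓ(b)φ(x,b) and E_δ(x) = sup_b ℓ(b)δ(x,b). If E_φ(x) ≥ E_δ(x) for P-almost every x and P({x : E_φ(x) > E_δ(x)}) > 0, then δ is not Γ-admissible. Consequently, if ∫ E_δ dP < 1 then δ is not Γ-admissible. The same statements hold for binary test families when P and Q are continuous (the distribution of Λ under P is atomless) and admissibility is restricted to binary test families. -/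
open MeasureTheory
open scoped ENNReal

namespace PostHocTesting

variable {𝒳 : Type*} [MeasurableSpace 𝒳]

/-- Modify `δ` at a single scenario `b0` on a set `S`. -/
noncomputable def modFam (S : Set 𝒳) (b0 : ℝ) (v : 𝒳 → ℝ) (δ : 𝒳 → ℝ → ℝ) : 𝒳 → ℝ → ℝ :=
  open Classical in fun x b => if x ∈ S ∧ b = b0 then v x else δ x b

lemma le_Esup {ℬ : Set ℝ} {ℓ : ℝ → ℝ} (δ : 𝒳 → ℝ → ℝ) (x : 𝒳) {b : ℝ} (hb : b ∈ ℬ) :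
    ENNReal.ofReal (ℓ b * δ x b) ≤ Esup ℬ ℓ δ x :=
  le_iSup (fun b : ℬ => ENNReal.ofReal (ℓ (b : ℝ) * δ x (b : ℝ))) ⟨b, hb⟩

open Classical in
lemma Esup_modFam {ℬ : Set ℝ} {ℓ : ℝ → ℝ} {δ : 𝒳 → ℝ → ℝ} (hℓpos : ∀ b ∈ ℬ, 0 < ℓ b)
    {b0 : ℝ} (hb0 : b0 ∈ ℬ) {S : Set 𝒳} {v : 𝒳 → ℝ} (hlt : ∀ x ∈ S, δ x b0 < v x) :
    Esup ℬ ℓ (modFam S b0 v δ) =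
      S.piecewise (fun x => max (Esup ℬ ℓ δ x) (ENNReal.ofReal (ℓ b0 * v x))) (Esup ℬ ℓ δ) := by
  funext x
  by_cases hx : x ∈ S
  · rw [Set.piecewise_eq_of_mem _ _ _ hx]
    apply le_antisymm
    · refine iSup_le fun b => ?_
      by_cases hb : (b : ℝ) = b0
      · simp [modFam, hx, hb]
      · simp only [modFam, hx, hb, and_false, if_false]
        exact (le_Esup δ x b.2).trans (le_max_left _ _)
    · refine max_le (iSup_le fun b => ?_) ?_
      · refine le_trans ?_ (le_Esup _ x b.2)
        by_cases hb : (b : ℝ) = b0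
        · simp only [modFam, hx, hb, and_self, if_true]
          exact ENNReal.ofReal_le_ofReal
            (mul_le_mul_of_nonneg_left (hlt x hx).le (hℓpos _ hb0).le)
        · simp [modFam, hx, hb]
      · refine le_trans ?_ (le_Esup _ x hb0)
        simp [modFam, hx]
  · rw [Set.piecewise_eq_of_notMem _ _ _ hx]
    simp [Esup, modFam, hx]

open Classical in
lemma core (P Q : Measure 𝒳) [IsProbabilityMeasure Q]
    (hPQ : P ≪ Q) {ℬ : Set ℝ} {ℓ : ℝ → ℝ} (hℓpos : ∀ b ∈ ℬ, 0 < ℓ b)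
    {m : ℝ → ℝ} (hm : ∀ b ∈ ℬ, 0 < m b)
    {Γ : Set (𝒳 → ℝ)} (hΓ : ConstAdv 𝒳 ℬ ⊆ Γ)
    {δ : 𝒳 → ℝ → ℝ} (hδ : IsTestFamily ℬ ℓ δ)
    {b0 : ℝ} (hb0 : b0 ∈ ℬ) {S : Set 𝒳} (hS : MeasurableSet S) (hPS : P S ≠ 0)
    {v : 𝒳 → ℝ} (hv : Measurable v) (hv1 : ∀ x ∈ S, v x ≤ 1)
    (hlt : ∀ x ∈ S, δ x b0 < v x)
    {G : 𝒳 → ℝ≥0∞} (hG : ∀ᵐ x ∂P, Esup ℬ ℓ δ x ≤ G x)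
    (hvG : ∀ x ∈ S, ENNReal.ofReal (ℓ b0 * v x) ≤ G x) (hG1 : ∫⁻ x, G x ∂P ≤ 1) :
    IsTestFamily ℬ ℓ (modFam S b0 v δ) ∧
      StrictlyPreferable P Q ℬ ℓ m Γ (modFam S b0 v δ) δ := by
  obtain ⟨hδm, hδ01, hδE⟩ := hδ
  have hE := Esup_modFam (δ := δ) hℓpos hb0 hlt
  have hmeas : Measurable (fun p : 𝒳 × ℝ => modFam S b0 v δ p.1 p.2) := by
    unfold modFam
    refine Measurable.ite ?_ (hv.comp measurable_fst) hδm
    exact (measurable_fst hS).inter (measurable_snd (measurableSet_singleton b0))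
  have hpt : ∀ (B : 𝒳 → ℝ) (x : 𝒳), ENNReal.ofReal (m (B x) * (1 - modFam S b0 v δ x (B x)))
      ≤ ENNReal.ofReal (m (B x) * (1 - δ x (B x))) := by
    intro B x
    by_cases h : x ∈ S ∧ B x = b0
    · simp only [modFam, h, and_self, if_true]
      apply ENNReal.ofReal_le_ofReal
      have := hlt x h.1
      have := hm b0 hb0
      gcongr
    · simp [modFam, h]
  refine ⟨⟨hmeas, ?_, ?_⟩, ?_, ?_, ?_⟩
  · intro x b hb
    by_cases h : x ∈ S ∧ b = b0
    · simp only [modFam, h, and_self, if_true]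
      exact ⟨(hδ01 x b0 hb0).1.trans (hlt x h.1).le, hv1 x h.1⟩
    · simp only [modFam, h, if_false]
      exact hδ01 x b hb
  · rw [hE]
    exact Measurable.piecewise hS (hδE.max (hv.const_mul _).ennreal_ofReal) hδE
  · unfold RiskSafe typeIRisk
    refine le_trans (lintegral_mono_ae ?_) hG1
    filter_upwards [hG] with x hx
    rw [hE]
    by_cases h : x ∈ S
    · rw [Set.piecewise_eq_of_mem _ _ _ h]
      exact max_le hx (hvG x h)
    · rwa [Set.piecewise_eq_of_notMem _ _ _ h]
  · intro B _
    exact lintegral_mono (hpt B)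
  · refine ⟨fun _ => b0, hΓ ⟨b0, hb0, rfl⟩, ?_⟩
    have hsec : Measurable (fun x => δ x b0) := hδm.comp (measurable_id.prodMk measurable_const)
    have hsec' : Measurable (fun x => modFam S b0 v δ x b0) :=
      hmeas.comp (measurable_id.prodMk measurable_const)
    unfold typeIIRisk
    have hQS : Q S ≠ 0 := fun h => hPS (hPQ h)
    refine lintegral_strict_mono_of_ae_le_of_ae_lt_on
      ((hsec.const_sub 1).const_mul _).ennreal_ofReal.aemeasurable ?_
      (Filter.Eventually.of_forall (hpt fun _ => b0)) hQS
      (Filter.Eventually.of_forall ?_)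
    · refine ne_of_lt (lt_of_le_of_lt (lintegral_mono (g := fun _ => ENNReal.ofReal (m b0)) ?_) ?_)
      · intro x
        apply ENNReal.ofReal_le_ofReal
        have hmem : 0 ≤ modFam S b0 v δ x b0 := by
          by_cases h : x ∈ S
          · simp only [modFam, h, and_self, if_true]
            exact (hδ01 x b0 hb0).1.trans (hlt x h).le
          · simp only [modFam, h, false_and, if_false]
            exact (hδ01 x b0 hb0).1
        have := hm b0 hb0
        nlinarith
      · simp
    · intro x hx
      have h1 : δ x b0 < v x := hlt x hx
      have h2 : 0 < m b0 := hm b0 hb0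
      have h3 := hv1 x hx
      simp only [modFam, hx, and_self, if_true]
      rw [ENNReal.ofReal_lt_ofReal_iff (by nlinarith)]
      nlinarith

lemma core_rand (P Q : Measure 𝒳) [IsProbabilityMeasure Q]
    (hPQ : P ≪ Q) {ℬ : Set ℝ} {ℓ : ℝ → ℝ} (hℓpos : ∀ b ∈ ℬ, 0 < ℓ b)
    {m : ℝ → ℝ} (hm : ∀ b ∈ ℬ, 0 < m b)
    {Γ : Set (𝒳 → ℝ)} (hΓ : ConstAdv 𝒳 ℬ ⊆ Γ)
    {δ : 𝒳 → ℝ → ℝ} (hδ : IsTestFamily ℬ ℓ δ)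
    {b0 : ℝ} (hb0 : b0 ∈ ℬ)
    {G : 𝒳 → ℝ≥0∞} (hGm : Measurable G) (hG : ∀ᵐ x ∂P, Esup ℬ ℓ δ x ≤ G x)
    (hG1 : ∫⁻ x, G x ∂P ≤ 1)
    (hpos : P {x | Esup ℬ ℓ δ x < G x ∧ Esup ℬ ℓ δ x < ENNReal.ofReal (ℓ b0)} ≠ 0) :
    ¬ Admissible P Q ℬ ℓ m Γ δ := by
  intro hadm
  have hl : 0 < ℓ b0 := hℓpos _ hb0
  have hkey : ∀ x, ℓ b0 * ((min (ENNReal.ofReal (ℓ b0)) (G x)).toReal / ℓ b0) =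
      (min (ENNReal.ofReal (ℓ b0)) (G x)).toReal := fun x => by field_simp
  have hfin : ∀ x, min (ENNReal.ofReal (ℓ b0)) (G x) ≠ ⊤ := fun x =>
    ne_top_of_le_ne_top ENNReal.ofReal_ne_top (min_le_left _ _)
  have := core P Q hPQ hℓpos hm hΓ hδ hb0
    (S := {x | Esup ℬ ℓ δ x < G x ∧ Esup ℬ ℓ δ x < ENNReal.ofReal (ℓ b0)})
    ((measurableSet_lt hδ.2.2 hGm).inter (measurableSet_lt hδ.2.2 measurable_const)) hpos
    (v := fun x => (min (ENNReal.ofReal (ℓ b0)) (G x)).toReal / ℓ b0)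
    ((measurable_const.min hGm).ennreal_toReal.div_const _)
    (fun x _ => by
      rw [div_le_one hl]
      exact ENNReal.toReal_le_of_le_ofReal hl.le (min_le_left _ _))
    (fun x hx => by
      rw [lt_div_iff₀ hl, mul_comm]
      have h1 : ENNReal.ofReal (ℓ b0 * δ x b0) < min (ENNReal.ofReal (ℓ b0)) (G x) :=
        lt_of_le_of_lt (le_Esup δ x hb0) (lt_min hx.2 hx.1)
      exact (ENNReal.ofReal_lt_iff_lt_toReal
        (mul_nonneg hl.le (hδ.2.1 x b0 hb0).1) (hfin x)).1 h1)
    hG (fun x _ => by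
      rw [hkey, ENNReal.ofReal_toReal (hfin x)]
      exact min_le_right _ _) hG1
  exact hadm.2 _ this.1 this.2

lemma core_bin (P Q : Measure 𝒳) [IsProbabilityMeasure Q]
    (hPQ : P ≪ Q) {ℬ : Set ℝ} {ℓ : ℝ → ℝ} (hℓpos : ∀ b ∈ ℬ, 0 < ℓ b)
    {m : ℝ → ℝ} (hm : ∀ b ∈ ℬ, 0 < m b)
    {Γ : Set (𝒳 → ℝ)} (hΓ : ConstAdv 𝒳 ℬ ⊆ Γ)
    {δ : 𝒳 → ℝ → ℝ} (hδ : IsBinaryTestFamily ℬ ℓ δ)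
    {b0 : ℝ} (hb0 : b0 ∈ ℬ) {S : Set 𝒳} (hS : MeasurableSet S) (hPS : P S ≠ 0)
    (hlt : ∀ x ∈ S, Esup ℬ ℓ δ x < ENNReal.ofReal (ℓ b0))
    {G : 𝒳 → ℝ≥0∞} (hG : ∀ᵐ x ∂P, Esup ℬ ℓ δ x ≤ G x)
    (hvG : ∀ x ∈ S, ENNReal.ofReal (ℓ b0) ≤ G x) (hG1 : ∫⁻ x, G x ∂P ≤ 1) :
    ¬ AdmissibleBinary P Q ℬ ℓ m Γ δ := by
  intro hadm
  have := core P Q hPQ hℓpos hm hΓ hδ.1 hb0 hS hPS (v := fun _ => 1) measurable_const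
    (fun _ _ => le_rfl)
    (fun x hx => by
      rcases hδ.2 x b0 hb0 with h | h
      · simp [h]
      · have h1 := lt_of_le_of_lt (le_Esup (ℓ := ℓ) δ x hb0) (hlt x hx)
        simp [h] at h1)
    hG (fun x hx => by simpa using hvG x hx) hG1
  refine hadm.2 _ ⟨this.1, ?_⟩ this.2
  intro x b hb
  by_cases h : x ∈ S ∧ b = b0
  · right; simp [modFam, h]
  · simpa [modFam, h] using hδ.2 x b hb

open scoped Topology in
lemma exists_countable_left_dense (A : Set ℝ) :
    ∃ D : Set ℝ, D.Countable ∧ D ⊆ A ∧ ∀ a ∈ A, ∀ c < a, ∃ d ∈ D, c < d ∧ d ≤ a := by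
  obtain ⟨D₀, hD₀A, hD₀c, hD₀⟩ := (TopologicalSpace.IsSeparable.of_separableSpace A).exists_countable_dense_subset
  refine ⟨D₀ ∪ {a ∈ A | 𝓝[A ∩ Set.Iio a] a = ⊥}, hD₀c.union
    countable_setOfPred_isolated_left_within, ?_, ?_⟩
  · rintro a (h | h)
    exacts [hD₀A h, h.1]
  · intro a ha c hc
    by_cases h : 𝓝[A ∩ Set.Iio a] a = ⊥
    · exact ⟨a, Or.inr ⟨ha, h⟩, hc, le_rfl⟩
    · have : (𝓝[A ∩ Set.Iio a] a).NeBot := ⟨h⟩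
      have h1 : Set.Ioi c ∈ 𝓝[A ∩ Set.Iio a] a := mem_nhdsWithin_of_mem_nhds (Ioi_mem_nhds hc)
      obtain ⟨y, hy1, hy2⟩ := Filter.nonempty_of_mem (Filter.inter_mem h1 self_mem_nhdsWithin)
      obtain ⟨z, hz1, hz2⟩ := mem_closure_iff.1 (hD₀ hy2.1) (Set.Ioo c a) isOpen_Ioo ⟨hy1, hy2.2⟩
      exact ⟨z, Or.inl hz2, hz1.1, hz1.2.le⟩

/-- Choice of a single scenario on which the two e-values are separated. -/
lemma exists_scenario (P : Measure 𝒳) {ℬ : Set ℝ} {ℓ : ℝ → ℝ}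
    (R : ℝ → Set 𝒳) (T : Set 𝒳) (hT : 0 < P T) (e : 𝒳 → ℝ≥0∞)
    (hR : ∀ x ∈ T, ∃ b ∈ ℬ, e x < ENNReal.ofReal (ℓ b) ∧
      ∀ b' ∈ ℬ, e x < ENNReal.ofReal (ℓ b') → ℓ b' ≤ ℓ b → x ∈ R b') :
    ∃ b ∈ ℬ, P (R b) ≠ 0 := by
  obtain ⟨D, hDc, hDA, hD⟩ := exists_countable_left_dense (ℓ '' ℬ)
  have hDA2 : ∀ d, d ∈ D → ∃ b, b ∈ ℬ ∧ ℓ b = d := fun d hd => hDA hd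
  choose! g hg using hDA2
  by_contra! hcon
  have hsub : T ⊆ ⋃ d ∈ D, R (g d) := by
    intro x hx
    obtain ⟨b, hb, h1, h2⟩ := hR x hx
    have hlt : (e x).toReal < ℓ b := (ENNReal.lt_ofReal_iff_toReal_lt h1.ne_top).1 h1
    obtain ⟨d, hd, hcd, hda⟩ := hD _ ⟨b, hb, rfl⟩ _ hlt
    have h3 := hg d hd
    refine Set.mem_biUnion hd (h2 _ h3.1 ?_ ?_)
    · rw [h3.2]; exact (ENNReal.lt_ofReal_iff_toReal_lt h1.ne_top).2 hcd
    · rw [h3.2]; exact hda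
  have : P (⋃ d ∈ D, R (g d)) = 0 :=
    (measure_biUnion_null_iff hDc).2 fun d hd => hcon _ (hg d hd).1
  exact hT.ne' (measure_mono_null hsub this)

lemma exists_small (P Q : Measure 𝒳) [IsProbabilityMeasure P] (hat : AtomlessLR P Q)
    {T : Set 𝒳} (hT : P T ≠ 0) {ε : ℝ≥0∞} (hε : ε ≠ 0) (hTm : MeasurableSet T) :
    ∃ S ⊆ T, MeasurableSet S ∧ P S ≠ 0 ∧ P S < ε := by
  have hLR : Measurable (LR P Q) := (Measure.measurable_rnDeriv Q P).ennreal_toReal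
  set μ := (P.restrict T).map (LR P Q) with hμ
  have : IsFiniteMeasure μ := by rw [hμ]; infer_instance
  have hμu : μ Set.univ ≠ 0 := by
    rw [hμ, Measure.map_apply hLR MeasurableSet.univ]; simpa using hT
  obtain ⟨c, -, hc⟩ := exists_mem_forall_mem_nhdsWithin_pos_measure hμu
  have hc0 : μ {c} < ε := by
    rw [hμ, Measure.map_apply hLR (measurableSet_singleton c)]
    have h0 : (P.restrict T) (LR P Q ⁻¹' {c}) = 0 :=
      le_antisymm ((Measure.restrict_apply_le T _).trans (hat c).le) zero_le
    rw [h0]; exact pos_iff_ne_zero.2 hε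
  obtain ⟨U, hU, hUo, hUε⟩ := Set.exists_isOpen_lt_of_lt {c} ε hc0
  have hUp := hc U (by rw [nhdsWithin_univ]; exact hUo.mem_nhds (hU rfl))
  rw [hμ, Measure.map_apply hLR hUo.measurableSet,
    Measure.restrict_apply (hLR hUo.measurableSet)] at hUε hUp
  exact ⟨LR P Q ⁻¹' U ∩ T, Set.inter_subset_right, (hLR hUo.measurableSet).inter hTm,
    hUp.ne', hUε⟩

/-- if the e-value of the risk-safe family `φ` `P`-a.s. dominates (and with
positive probability strictly exceeds) that of the risk-safe family `δ`, then `δ` is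
`Γ`-inadmissible; consequently non-sharp families are inadmissible.  The same statements
hold for binary families when the likelihood ratio is atomless under `P`. -/
theorem stmt3
    [StandardBorelSpace 𝒳]
    (P Q : Measure 𝒳) [IsProbabilityMeasure P] [IsProbabilityMeasure Q]
    (hPQ : P ≪ Q) (hQP : Q ≪ P)
    (ℬ : Set ℝ) (hℬne : ℬ.Nonempty)
    (ℓ : ℝ → ℝ) (hℓmeas : Measurable ℓ) (hℓpos : ∀ b ∈ ℬ, 0 < ℓ b)
    (hℓmono : ∀ b₁ ∈ ℬ, ∀ b₂ ∈ ℬ, b₁ ≤ b₂ → ℓ b₁ ≤ ℓ b₂)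
    (hℓgt1 : ∃ b ∈ ℬ, 1 < ℓ b)
    (m : ℝ → ℝ) (hm : ∀ b ∈ ℬ, 0 < m b)
    (Γ : Set (𝒳 → ℝ)) (hΓ : ConstAdv 𝒳 ℬ ⊆ Γ)
    (φ δ : 𝒳 → ℝ → ℝ)
    (hφ : IsTestFamily ℬ ℓ φ) (hδ : IsTestFamily ℬ ℓ δ)
    (hφsafe : RiskSafe P ℬ ℓ φ) (hδsafe : RiskSafe P ℬ ℓ δ) :
    ((∀ᵐ x ∂P, Esup ℬ ℓ δ x ≤ Esup ℬ ℓ φ x) →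
      0 < P {x | Esup ℬ ℓ δ x < Esup ℬ ℓ φ x} →
      ¬ Admissible P Q ℬ ℓ m Γ δ) ∧
    (typeIRisk P ℬ ℓ δ < 1 → ¬ Admissible P Q ℬ ℓ m Γ δ) ∧
    (AtomlessLR P Q → IsBinaryTestFamily ℬ ℓ φ → IsBinaryTestFamily ℬ ℓ δ →
      (∀ᵐ x ∂P, Esup ℬ ℓ δ x ≤ Esup ℬ ℓ φ x) →
      0 < P {x | Esup ℬ ℓ δ x < Esup ℬ ℓ φ x} →
      ¬ AdmissibleBinary P Q ℬ ℓ m Γ δ) ∧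
    (AtomlessLR P Q → IsBinaryTestFamily ℬ ℓ δ → typeIRisk P ℬ ℓ δ < 1 →
      ¬ AdmissibleBinary P Q ℬ ℓ m Γ δ) := by
  have hsub1 : typeIRisk P ℬ ℓ δ < 1 → P {x | Esup ℬ ℓ δ x < 1} ≠ 0 := by
    intro h h0
    have h1 : ∀ᵐ x ∂P, (1 : ℝ≥0∞) ≤ Esup ℬ ℓ δ x := by
      rw [ae_iff]; simpa using h0
    have h2 := lintegral_mono_ae h1
    simp only [lintegral_const, measure_univ, mul_one] at h2
    exact absurd h (not_lt.2 h2)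
  obtain ⟨bs, hbs, hbs1⟩ := hℓgt1
  have hbs1' : (1 : ℝ≥0∞) < ENNReal.ofReal (ℓ bs) := by simpa using hbs1
  refine ⟨?_, ?_, ?_, ?_⟩
  · intro hle hpos
    obtain ⟨b0, hb0, h⟩ := exists_scenario P (ℬ := ℬ) (ℓ := ℓ)
      (fun b => {x | Esup ℬ ℓ δ x < Esup ℬ ℓ φ x ∧ Esup ℬ ℓ δ x < ENNReal.ofReal (ℓ b)})
      _ hpos (Esup ℬ ℓ δ) (by
        intro x hx
        obtain ⟨b, hb⟩ := lt_iSup_iff.1 (show Esup ℬ ℓ δ x < _ from hx)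
        refine ⟨b, b.2, hb.trans_le (ENNReal.ofReal_le_ofReal ?_), fun b' _ h _ => ⟨hx, h⟩⟩
        exact mul_le_of_le_one_right (hℓpos _ b.2).le (hφ.2.1 x b b.2).2)
    exact core_rand P Q hPQ hℓpos hm hΓ hδ hb0 hφ.2.2 hle hφsafe h
  · intro h
    have hne : 1 - typeIRisk P ℬ ℓ δ ≠ 0 := (tsub_pos_of_lt h).ne'
    refine core_rand P Q hPQ hℓpos hm hΓ hδ hbs
      (G := fun x => Esup ℬ ℓ δ x + (1 - typeIRisk P ℬ ℓ δ)) (hδ.2.2.add_const _)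
      (Filter.Eventually.of_forall fun x => le_self_add) ?_ ?_
    · rw [lintegral_add_right _ measurable_const]
      simp only [lintegral_const, measure_univ, mul_one]
      exact (add_tsub_cancel_of_le h.le).le
    · intro h0
      refine hsub1 h (measure_mono_null ?_ h0)
      intro x hx
      have hx' : Esup ℬ ℓ δ x < 1 := hx
      exact ⟨ENNReal.lt_add_right hx'.ne_top hne, hx'.trans hbs1'⟩
  · intro _ hφb hδb hle hpos
    obtain ⟨b0, hb0, h⟩ := exists_scenario P (ℬ := ℬ) (ℓ := ℓ)
      (fun b => {x | Esup ℬ ℓ δ x < ENNReal.ofReal (ℓ b) ∧ ENNReal.ofReal (ℓ b) ≤ Esup ℬ ℓ φ x})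
      _ hpos (Esup ℬ ℓ δ) (by
        intro x hx
        obtain ⟨b, hb⟩ := lt_iSup_iff.1 (show Esup ℬ ℓ δ x < _ from hx)
        have h1 : φ x b = 1 := by
          rcases hφb.2 x b b.2 with h | h
          · simp [h] at hb
          · exact h
        rw [h1, mul_one] at hb
        refine ⟨b, b.2, hb, fun b' _ h h' => ⟨h, ?_⟩⟩
        have h2 := le_Esup (ℓ := ℓ) φ x b.2
        rw [h1, mul_one] at h2
        exact (ENNReal.ofReal_le_ofReal h').trans h2)
    exact core_bin P Q hPQ hℓpos hm hΓ hδb hb0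
      ((measurableSet_lt hδ.2.2 measurable_const).inter (measurableSet_le measurable_const hφ.2.2))
      h (fun x hx => hx.1) hle (fun x hx => hx.2) hφsafe
  · intro hat hδb h
    have hne : 1 - typeIRisk P ℬ ℓ δ ≠ 0 := (tsub_pos_of_lt h).ne'
    obtain ⟨S, hST, hSm, hS0, hSε⟩ := exists_small P Q hat (hsub1 h)
      (ε := (1 - typeIRisk P ℬ ℓ δ) / ENNReal.ofReal (ℓ bs))
      (ENNReal.div_ne_zero.2 ⟨hne, ENNReal.ofReal_ne_top⟩)
      (measurableSet_lt hδ.2.2 measurable_const)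
    refine core_bin P Q hPQ hℓpos hm hΓ hδb hbs hSm hS0
      (fun x hx => lt_trans (hST hx) hbs1')
      (G := fun x => Esup ℬ ℓ δ x + S.indicator (fun _ => ENNReal.ofReal (ℓ bs)) x)
      (Filter.Eventually.of_forall fun x => le_self_add)
      (fun x hx => by simp [hx]) ?_
    rw [lintegral_add_left hδ.2.2, lintegral_indicator_const hSm]
    have h3 : ENNReal.ofReal (ℓ bs) * P S ≤ 1 - typeIRisk P ℬ ℓ δ := by
      rw [mul_comm]
      exact ENNReal.mul_le_of_le_div hSε.le
    calc _ ≤ typeIRisk P ℬ ℓ δ + (1 - typeIRisk P ℬ ℓ δ) := add_le_add le_rfl h3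
      _ = 1 := add_tsub_cancel_of_le h.le

end PostHocTesting
end

section
/- Let Γ be any set of adversaries containing all constant maps. If the test family δ is Γ-admissible, then for every b ∈ ℬ, δ(x,b) = min{1, E_δ(x)/ℓ(b)} for P-almost every x, where E_δ(x) = sup_{b∈ℬ} ℓ(b)δ(x,b). -/
open MeasureTheory
open scoped ENNReal

namespace PostHocTesting

variable {𝒳 : Type*} [MeasurableSpace 𝒳]

/-- canonical representation: any `Γ`-admissible randomized test family
satisfies `δ(x,b) = min{1, E_δ(x)/ℓ(b)}` for `P`-a.e. `x`, for each `b ∈ ℬ`. -/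
theorem stmt4
    [StandardBorelSpace 𝒳]
    (P Q : Measure 𝒳) [IsProbabilityMeasure P] [IsProbabilityMeasure Q]
    (hPQ : P ≪ Q) (hQP : Q ≪ P)
    (ℬ : Set ℝ) (hℬne : ℬ.Nonempty)
    (ℓ : ℝ → ℝ) (hℓmeas : Measurable ℓ) (hℓpos : ∀ b ∈ ℬ, 0 < ℓ b)
    (hℓmono : ∀ b₁ ∈ ℬ, ∀ b₂ ∈ ℬ, b₁ ≤ b₂ → ℓ b₁ ≤ ℓ b₂)
    (hℓgt1 : ∃ b ∈ ℬ, 1 < ℓ b)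
    (m : ℝ → ℝ) (hm : ∀ b ∈ ℬ, 0 < m b)
    (Γ : Set (𝒳 → ℝ)) (hΓ : ConstAdv 𝒳 ℬ ⊆ Γ)
    (δ : 𝒳 → ℝ → ℝ) (hδ : IsTestFamily ℬ ℓ δ)
    (hadm : Admissible P Q ℬ ℓ m Γ δ) :
    ∀ b ∈ ℬ, ∀ᵐ x ∂P,
      ENNReal.ofReal (δ x b) = min 1 (Esup ℬ ℓ δ x / ENNReal.ofReal (ℓ b)) := by
  classical
  intro b₀ hb₀
  obtain ⟨hδm, hδ01, hδE⟩ := hδ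
  obtain ⟨hsafe, hno⟩ := hadm
  have hl : 0 < ℓ b₀ := hℓpos b₀ hb₀
  have hl0 : ENNReal.ofReal (ℓ b₀) ≠ 0 := by simpa using hl
  set g : 𝒳 → ℝ≥0∞ := fun x => min 1 (Esup ℬ ℓ δ x / ENNReal.ofReal (ℓ b₀)) with hg
  have hgm : Measurable g := measurable_const.min (hδE.div_const _)
  have hg1 : ∀ x, g x ≤ 1 := fun x => min_le_left _ _
  have hgtop : ∀ x, g x ≠ ⊤ := fun x => ne_top_of_le_ne_top ENNReal.one_ne_top (hg1 x)
  have hδg : ∀ x, ENNReal.ofReal (δ x b₀) ≤ g x := by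
    intro x
    refine le_min ?_ ?_
    · simpa using (hδ01 x b₀ hb₀).2
    · rw [ENNReal.le_div_iff_mul_le (Or.inl hl0) (Or.inl ENNReal.ofReal_ne_top), mul_comm,
        ← ENNReal.ofReal_mul hl.le]
      exact le_iSup (fun b : ℬ => ENNReal.ofReal (ℓ (b : ℝ) * δ x (b : ℝ))) ⟨b₀, hb₀⟩
  have hδg' : ∀ x, δ x b₀ ≤ (g x).toReal := fun x =>
    (ENNReal.ofReal_le_iff_le_toReal (hgtop x)).1 (hδg x)
  have hgr1 : ∀ x, (g x).toReal ≤ 1 := fun x => by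
    simpa using ENNReal.toReal_mono ENNReal.one_ne_top (hg1 x)
  set φ : 𝒳 → ℝ → ℝ := fun x b => if b = b₀ then (g x).toReal else δ x b with hφ
  have hφb : ∀ x, φ x b₀ = (g x).toReal := fun x => by simp [hφ]
  have hφn : ∀ x b, b ≠ b₀ → φ x b = δ x b := fun x b h => by simp [hφ, h]
  have hφE : Esup ℬ ℓ φ = Esup ℬ ℓ δ := by
    funext x
    apply le_antisymm
    · refine iSup_le fun b => ?_
      by_cases h : (b : ℝ) = b₀
      · rw [h, hφb, ENNReal.ofReal_mul hl.le, ENNReal.ofReal_toReal (hgtop x), mul_comm]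
        exact (ENNReal.le_div_iff_mul_le (Or.inl hl0) (Or.inl ENNReal.ofReal_ne_top)).1
          (min_le_right _ _)
      · rw [hφn x b h]
        exact le_iSup (fun b : ℬ => ENNReal.ofReal (ℓ (b : ℝ) * δ x (b : ℝ))) b
    · refine iSup_mono fun b => ENNReal.ofReal_le_ofReal ?_
      refine mul_le_mul_of_nonneg_left ?_ (hℓpos b b.2).le
      by_cases h : (b : ℝ) = b₀
      · rw [h, hφb]; exact hδg' x
      · rw [hφn x b h]
  have hφt : IsTestFamily ℬ ℓ φ := by
    refine ⟨?_, ?_, hφE ▸ hδE⟩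
    · exact Measurable.ite (measurable_snd (measurableSet_singleton b₀))
        (hgm.ennreal_toReal.comp measurable_fst) hδm
    · intro x b hb
      by_cases h : b = b₀
      · rw [h, hφb]; exact ⟨ENNReal.toReal_nonneg, hgr1 x⟩
      · rw [hφn x b h]; exact hδ01 x b hb
  have hle : ∀ B : 𝒳 → ℝ, ∀ x, ENNReal.ofReal (m (B x) * (1 - φ x (B x))) ≤
      ENNReal.ofReal (m (B x) * (1 - δ x (B x))) := by
    intro B x
    by_cases h : B x = b₀
    · rw [h, hφb]
      exact ENNReal.ofReal_le_ofReal
        (mul_le_mul_of_nonneg_left (by linarith [hδg' x]) (hm b₀ hb₀).le)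
    · rw [hφn x _ h]
  have hnot : ¬ typeIIRisk Q m φ (fun _ => b₀) < typeIIRisk Q m δ (fun _ => b₀) := by
    intro hlt
    refine hno φ hφt ⟨?_, fun B _ => lintegral_mono (hle B), _, hΓ ⟨b₀, hb₀, rfl⟩, hlt⟩
    unfold RiskSafe typeIRisk
    rw [hφE]
    exact hsafe
  have hδb : Measurable fun x => δ x b₀ :=
    hδm.comp (measurable_id.prodMk measurable_const)
  have hfin : typeIIRisk Q m φ (fun _ => b₀) ≠ ⊤ := by
    refine ne_top_of_le_ne_top (b := ∫⁻ _, ENNReal.ofReal (m b₀) ∂Q) (by simp) ?_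
    refine lintegral_mono fun x => ENNReal.ofReal_le_ofReal ?_
    have : 0 ≤ φ x b₀ := by rw [hφb]; exact ENNReal.toReal_nonneg
    nlinarith [hm b₀ hb₀]
  have hae := ae_eq_of_ae_le_of_lintegral_le (Filter.Eventually.of_forall (hle fun _ => b₀)) hfin
    ((hδb.const_sub 1).const_mul (m b₀)).ennreal_ofReal.aemeasurable (not_lt.1 hnot)
  filter_upwards [hPQ.ae_le hae] with x hx
  have h1 : 0 ≤ m b₀ * (1 - φ x b₀) :=
    mul_nonneg (hm b₀ hb₀).le (by rw [hφb]; linarith [hgr1 x])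
  have h2 : 0 ≤ m b₀ * (1 - δ x b₀) :=
    mul_nonneg (hm b₀ hb₀).le (by linarith [(hδ01 x b₀ hb₀).2])
  have h3 := (ENNReal.ofReal_eq_ofReal_iff h1 h2).1 hx
  have h4 := mul_left_cancel₀ (hm b₀ hb₀).ne' h3
  rw [hφb] at h4
  have h5 : δ x b₀ = (g x).toReal := by linarith
  rw [h5, ENNReal.ofReal_toReal (hgtop x)]

end PostHocTesting
end

section
/- Let E be an e-variable for P and let δ_E(x,b) = min{1, E(x)/ℓ(b)} be the associated randomized test family. If P({x : E(x) > sup_{b∈ℬ} ℓ(b)}) > 0, then δ_E is not Γ-admissible for any set of adversaries Γ containing all constant maps. -/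
open MeasureTheory
open scoped ENNReal

namespace PostHocTesting

variable {𝒳 : Type*} [MeasurableSpace 𝒳]

/-- if the e-variable `E` exceeds `sup_{b∈ℬ} ℓ(b)` with positive
`P`-probability, then the associated randomized test family
`δ_E(x,b) = min{1, E(x)/ℓ(b)}` is `Γ`-inadmissible for every `Γ ⊇ 𝐂`. -/
theorem stmt5
    [StandardBorelSpace 𝒳]
    (P Q : Measure 𝒳) [IsProbabilityMeasure P] [IsProbabilityMeasure Q]
    (hPQ : P ≪ Q) (hQP : Q ≪ P)
    (ℬ : Set ℝ) (hℬne : ℬ.Nonempty)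
    (ℓ : ℝ → ℝ) (hℓmeas : Measurable ℓ) (hℓpos : ∀ b ∈ ℬ, 0 < ℓ b)
    (hℓmono : ∀ b₁ ∈ ℬ, ∀ b₂ ∈ ℬ, b₁ ≤ b₂ → ℓ b₁ ≤ ℓ b₂)
    (hℓgt1 : ∃ b ∈ ℬ, 1 < ℓ b)
    (m : ℝ → ℝ) (hm : ∀ b ∈ ℬ, 0 < m b)
    (E : 𝒳 → ℝ) (hEmeas : Measurable E) (hEnn : ∀ x, 0 ≤ E x)
    (hEev : ∫⁻ x, ENNReal.ofReal (E x) ∂P ≤ 1)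
    (hbig : 0 < P {x | (⨆ b : ℬ, ENNReal.ofReal (ℓ (b : ℝ))) < ENNReal.ofReal (E x)}) :
    ∀ Γ : Set (𝒳 → ℝ), ConstAdv 𝒳 ℬ ⊆ Γ →
      ¬ Admissible P Q ℬ ℓ m Γ (fun x b => min 1 (E x / ℓ b)) := by
  intro Γ hΓ hadm
  obtain ⟨-, hadm⟩ := hadm
  set T : ℝ≥0∞ := ⨆ b : ℬ, ENNReal.ofReal (ℓ (b : ℝ)) with hT
  have hfreq : ∃ᵐ x ∂P, T < ENNReal.ofReal (E x) := by
    rw [frequently_ae_iff]; exact hbig.ne'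
  have hTtop : T ≠ ⊤ := by
    obtain ⟨x, hx⟩ := hfreq.exists
    exact (lt_of_lt_of_le hx le_top).ne
  set S : ℝ := T.toReal with hS
  have hSnn : 0 ≤ S := ENNReal.toReal_nonneg
  have hTS : ENNReal.ofReal S = T := ENNReal.ofReal_toReal hTtop
  have hlS : ∀ b ∈ ℬ, ℓ b ≤ S := by
    intro b hb
    have h1 : ENNReal.ofReal (ℓ b) ≤ T := le_iSup (fun b : ℬ => ENNReal.ofReal (ℓ (b : ℝ))) ⟨b, hb⟩
    rw [← hTS] at h1
    exact (ENNReal.ofReal_le_ofReal_iff hSnn).1 h1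
  set I : ℝ≥0∞ := ∫⁻ x, ENNReal.ofReal (min (E x) S) ∂P with hI
  have hIle : I ≤ 1 :=
    (lintegral_mono fun x => ENNReal.ofReal_le_ofReal (min_le_left _ _)).trans hEev
  have hI1 : I < 1 := by
    refine lt_of_lt_of_le ?_ hEev
    refine lintegral_strict_mono_of_ae_le_of_frequently_ae_lt
      hEmeas.ennreal_ofReal.aemeasurable (hIle.trans_lt ENNReal.one_lt_top).ne
      (Filter.Eventually.of_forall fun x => ENNReal.ofReal_le_ofReal (min_le_left _ _)) ?_
    refine hfreq.mono fun x hx => ne_of_lt ?_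
    exact lt_of_le_of_lt ((ENNReal.ofReal_le_ofReal (min_le_right _ _)).trans hTS.le) hx
  set c : ℝ := (1 - I).toReal with hc
  have hItop : 1 - I ≠ ⊤ := (tsub_le_self.trans_lt ENNReal.one_lt_top).ne
  have hcpos : 0 < c := ENNReal.toReal_pos (tsub_pos_of_lt hI1).ne' hItop
  set F : 𝒳 → ℝ := fun x => min (E x) S + c with hF
  have hFmeas : Measurable F := (hEmeas.min measurable_const).add_const c
  have hFnn : ∀ x, 0 ≤ F x := fun x => add_nonneg (le_min (hEnn x) hSnn) hcpos.le
  have hFint : ∫⁻ x, ENNReal.ofReal (F x) ∂P = 1 := by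
    have h1 : ∀ x, ENNReal.ofReal (F x) = ENNReal.ofReal (min (E x) S) + (1 - I) := fun x => by
      rw [hF, ENNReal.ofReal_add (le_min (hEnn x) hSnn) hcpos.le, hc, ENNReal.ofReal_toReal hItop]
    simp_rw [h1]
    rw [lintegral_add_right _ measurable_const, lintegral_const, measure_univ, mul_one, ← hI]
    exact add_tsub_cancel_of_le hIle
  set φ : 𝒳 → ℝ → ℝ := fun x b => max (min 1 (E x / ℓ b)) (min 1 (F x / ℓ b)) with hφ
  have hφle1 : ∀ x b, φ x b ≤ 1 := fun x b => max_le (min_le_left _ _) (min_le_left _ _)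
  have hEF : ∀ x, ∀ b ∈ ℬ, E x < ℓ b → E x + c = F x := by
    intro x b hb h
    simp only [hF]
    rw [min_eq_left (h.le.trans (hlS b hb))]
  have hφℬ : ∀ x, ∀ b ∈ ℬ, φ x b = min 1 (F x / ℓ b) := by
    intro x b hb
    have hp := hℓpos b hb
    refine max_eq_right ?_
    rcases lt_or_ge (E x) (ℓ b) with h | h
    · refine min_le_min le_rfl ?_
      have := hEF x b hb h
      gcongr
      linarith
    · refine (min_le_left _ _).trans (le_min le_rfl ?_)
      rw [le_div_iff₀ hp, one_mul]
      have : ℓ b ≤ min (E x) S := le_min h (hlS b hb)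
      simp only [hF]
      linarith
  have hEs : Esup ℬ ℓ φ = fun x => T ⊓ ENNReal.ofReal (F x) := by
    funext x
    rw [hT, iSup_inf_eq]
    unfold Esup
    refine iSup_congr fun b => ?_
    have hp := hℓpos b b.2
    rw [hφℬ x b b.2, mul_min_of_nonneg _ _ hp.le, mul_one, mul_div_cancel₀ _ hp.ne']
    exact ENNReal.ofReal_min _ _
  have hEsle : ∀ x, Esup ℬ ℓ φ x ≤ ENNReal.ofReal (F x) := fun x => by
    rw [hEs]; exact inf_le_right
  have hδm : ∀ b, Measurable fun x => min 1 (E x / ℓ b) := fun b =>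
    measurable_const.min (hEmeas.div_const _)
  refine hadm φ ⟨?_, ?_, ?_⟩ ⟨?_, ?_, ?_⟩
  · have hl : Measurable fun p : 𝒳 × ℝ => ℓ p.2 := hℓmeas.comp measurable_snd
    exact (measurable_const.min ((hEmeas.comp measurable_fst).div hl)).max
      (measurable_const.min ((hFmeas.comp measurable_fst).div hl))
  · intro x b hb
    refine ⟨?_, hφle1 x b⟩
    rw [hφℬ x b hb]
    exact le_min zero_le_one (div_nonneg (hFnn x) (hℓpos b hb).le)
  · rw [hEs]
    exact measurable_const.inf hFmeas.ennreal_ofReal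
  · exact (lintegral_mono hEsle).trans hFint.le
  · intro B _
    refine lintegral_mono fun x => ?_
    dsimp only
    rcases le_total (m (B x)) 0 with h | h
    · rw [ENNReal.ofReal_of_nonpos]
      · exact zero_le
      · exact mul_nonpos_of_nonpos_of_nonneg h (sub_nonneg.2 (hφle1 _ _))
    · refine ENNReal.ofReal_le_ofReal (mul_le_mul_of_nonneg_left ?_ h)
      exact sub_le_sub_left (le_max_left _ _) _
  · obtain ⟨b, hb, hb1⟩ := hℓgt1
    have hp := hℓpos b hb
    have hmb := hm b hb
    refine ⟨fun _ => b, hΓ ⟨b, hb, rfl⟩, ?_⟩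
    have hfP : ∃ᵐ x ∂P, E x < ℓ b := by
      intro hcon
      have h1 : ENNReal.ofReal (ℓ b) ≤ 1 := by
        calc ENNReal.ofReal (ℓ b) = ∫⁻ _, ENNReal.ofReal (ℓ b) ∂P := by simp
          _ ≤ ∫⁻ x, ENNReal.ofReal (E x) ∂P := by
            refine lintegral_mono_ae ?_
            filter_upwards [hcon] with x hx
            exact ENNReal.ofReal_le_ofReal (not_lt.1 hx)
          _ ≤ 1 := hEev
      exact absurd (ENNReal.ofReal_le_one.1 h1) (not_le.2 hb1)
    have hfQ : ∃ᵐ x ∂Q, E x < ℓ b := fun hcon => hfP (hPQ.ae_le hcon)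
    have hle : ∀ x, ENNReal.ofReal (m b * (1 - φ x b)) ≤
        ENNReal.ofReal (m b * (1 - min 1 (E x / ℓ b))) := fun x =>
      ENNReal.ofReal_le_ofReal (mul_le_mul_of_nonneg_left
        (sub_le_sub_left (le_max_left _ _) _) hmb.le)
    refine lintegral_strict_mono_of_ae_le_of_frequently_ae_lt
      ((measurable_const.mul (measurable_const.sub (hδm b))).ennreal_ofReal.aemeasurable)
      ?_ (Filter.Eventually.of_forall hle) ?_
    · refine ne_of_lt (lt_of_le_of_lt (b := ∫⁻ _, ENNReal.ofReal (m b) ∂Q) ?_ (by simp))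
      refine lintegral_mono fun x => ENNReal.ofReal_le_ofReal ?_
      have h0 : 0 ≤ φ x b := by
        rw [hφℬ x b hb]
        exact le_min zero_le_one (div_nonneg (hFnn x) hp.le)
      nlinarith
    · refine hfQ.mono fun x hx => ne_of_lt ?_
      have hlt1 : E x / ℓ b < 1 := (div_lt_one hp).2 hx
      have hlt2 : E x / ℓ b < F x / ℓ b := by
        have := hEF x b hb hx
        gcongr
        linarith
      have hlt : min 1 (E x / ℓ b) < φ x b := by
        rw [hφℬ x b hb, min_eq_right hlt1.le]
        exact lt_min hlt1 hlt2
      refine (ENNReal.ofReal_lt_ofReal_iff ?_).2 ?_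
      · dsimp only
        rw [min_eq_right hlt1.le]
        exact mul_pos hmb (sub_pos.2 hlt1)
      · exact mul_lt_mul_of_pos_left (sub_lt_sub_left hlt _) hmb

end PostHocTesting
end

section
/- Assume P and Q are continuous (the distribution of Λ under P is atomless) and let Γ be any set of adversaries containing all constant maps. If φ is a Γ-admissible binary test family, then for every b ∈ ℬ, φ(x,b) = 1{ℓ(b) ≤ E_φ(x)} for P-almost every x, where E_φ(x) = sup_{b∈ℬ} ℓ(b)φ(x,b). -/
open MeasureTheory
open scoped ENNReal

namespace PostHocTesting

variable {𝒳 : Type*} [MeasurableSpace 𝒳]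

/-- canonical representation, binary case: when the likelihood ratio is
atomless under `P`, any `Γ`-admissible binary test family satisfies
`φ(x,b) = 1{ℓ(b) ≤ E_φ(x)}` for `P`-a.e. `x`, for each `b ∈ ℬ`. -/
theorem stmt6
    [StandardBorelSpace 𝒳]
    (P Q : Measure 𝒳) [IsProbabilityMeasure P] [IsProbabilityMeasure Q]
    (hPQ : P ≪ Q) (hQP : Q ≪ P)
    (ℬ : Set ℝ) (hℬne : ℬ.Nonempty)
    (ℓ : ℝ → ℝ) (hℓmeas : Measurable ℓ) (hℓpos : ∀ b ∈ ℬ, 0 < ℓ b)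
    (hℓmono : ∀ b₁ ∈ ℬ, ∀ b₂ ∈ ℬ, b₁ ≤ b₂ → ℓ b₁ ≤ ℓ b₂)
    (hℓgt1 : ∃ b ∈ ℬ, 1 < ℓ b)
    (m : ℝ → ℝ) (hm : ∀ b ∈ ℬ, 0 < m b)
    (hcont : AtomlessLR P Q)
    (Γ : Set (𝒳 → ℝ)) (hΓ : ConstAdv 𝒳 ℬ ⊆ Γ)
    (φ : 𝒳 → ℝ → ℝ) (hφ : IsBinaryTestFamily ℬ ℓ φ)
    (hadm : AdmissibleBinary P Q ℬ ℓ m Γ φ) :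
    ∀ b ∈ ℬ, ∀ᵐ x ∂P,
      φ x b = if ENNReal.ofReal (ℓ b) ≤ Esup ℬ ℓ φ x then (1 : ℝ) else 0 := by
  intro b₀ hb₀
  obtain ⟨⟨hφm, hφI, hEm⟩, hφ01⟩ := hφ
  obtain ⟨hsafe, hno⟩ := hadm
  have hmul : ∀ x, ∀ b ∈ ℬ, ENNReal.ofReal (ℓ b * φ x b) ≤ Esup ℬ ℓ φ x := by
    intro x b hb
    exact le_iSup (fun b : ℬ => ENNReal.ofReal (ℓ (b : ℝ) * φ x (b : ℝ))) ⟨b, hb⟩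
  let g : 𝒳 → ℝ := fun x => if ENNReal.ofReal (ℓ b₀) ≤ Esup ℬ ℓ φ x then (1 : ℝ) else 0
  have hg01 : ∀ x, g x = 0 ∨ g x = 1 := by
    intro x
    by_cases h : ENNReal.ofReal (ℓ b₀) ≤ Esup ℬ ℓ φ x <;> simp [g, h]
  have hgm : Measurable g :=
    Measurable.ite (measurableSet_le measurable_const hEm) measurable_const measurable_const
  have hφg : ∀ x, φ x b₀ ≤ g x := by
    intro x
    rcases hφ01 x b₀ hb₀ with h | h
    · rcases hg01 x with h' | h' <;> simp [h, h']
    · have h1 := hmul x b₀ hb₀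
      rw [h, mul_one] at h1
      simp [g, h1, h]
  have hgE : ∀ x, ENNReal.ofReal (ℓ b₀ * g x) ≤ Esup ℬ ℓ φ x := by
    intro x
    by_cases h : ENNReal.ofReal (ℓ b₀) ≤ Esup ℬ ℓ φ x <;> simp [g, h]
  -- modify the test family in the single scenario `b₀`
  let ψ : 𝒳 → ℝ → ℝ := fun x b => if b = b₀ then g x else φ x b
  have hψ0 : ∀ x, ψ x b₀ = g x := fun x => by simp [ψ]
  have hψ1 : ∀ x b, b ≠ b₀ → ψ x b = φ x b := fun x b h => by simp [ψ, h]
  have hψφ : ∀ x b, φ x b ≤ ψ x b := by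
    intro x b
    by_cases h : b = b₀
    · subst h; rw [hψ0]; exact hφg x
    · rw [hψ1 x b h]
  have hψ01 : ∀ x, ∀ b ∈ ℬ, ψ x b = 0 ∨ ψ x b = 1 := by
    intro x b hb
    by_cases h : b = b₀
    · subst h; rw [hψ0]; exact hg01 x
    · rw [hψ1 x b h]; exact hφ01 x b hb
  have hE : Esup ℬ ℓ ψ = Esup ℬ ℓ φ := by
    funext x
    apply le_antisymm
    · refine iSup_le ?_
      rintro ⟨b, hb⟩
      by_cases h : b = b₀
      · subst h; simp only [hψ0]; exact hgE x
      · simp only [hψ1 x b h]; exact hmul x b hb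
    · refine iSup_mono ?_
      rintro ⟨b, hb⟩
      exact ENNReal.ofReal_le_ofReal
        (mul_le_mul_of_nonneg_left (hψφ x b) (hℓpos b hb).le)
  have hψm : Measurable (fun p : 𝒳 × ℝ => ψ p.1 p.2) :=
    Measurable.ite (measurableSet_eq_fun measurable_snd measurable_const)
      (hgm.comp measurable_fst) hφm
  have hψbin : IsBinaryTestFamily ℬ ℓ ψ := by
    refine ⟨⟨hψm, ?_, by rw [hE]; exact hEm⟩, hψ01⟩
    intro x b hb
    rcases hψ01 x b hb with h | h <;> simp [h]
  have hψsafe : RiskSafe P ℬ ℓ ψ := by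
    unfold RiskSafe typeIRisk
    rw [hE]; exact hsafe
  have hpt : ∀ (B : 𝒳 → ℝ) (x : 𝒳), ENNReal.ofReal (m (B x) * (1 - ψ x (B x)))
      ≤ ENNReal.ofReal (m (B x) * (1 - φ x (B x))) := by
    intro B x
    by_cases h : B x = b₀
    · rw [h]
      exact ENNReal.ofReal_le_ofReal
        (mul_le_mul_of_nonneg_left (by linarith [hψφ x b₀]) (hm b₀ hb₀).le)
    · rw [hψ1 x _ h]
  have hnlt : ¬ typeIIRisk Q m ψ (fun _ => b₀) < typeIIRisk Q m φ (fun _ => b₀) := by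
    intro hlt
    exact hno ψ hψbin ⟨hψsafe, fun B _ => lintegral_mono (hpt B),
      _, hΓ ⟨b₀, hb₀, rfl⟩, hlt⟩
  have hfin : typeIIRisk Q m ψ (fun _ => b₀) ≠ ∞ := by
    have : typeIIRisk Q m ψ (fun _ => b₀) ≤ ∫⁻ _, ENNReal.ofReal (m b₀) ∂Q := by
      refine lintegral_mono fun x => ENNReal.ofReal_le_ofReal ?_
      have := hm b₀ hb₀
      rcases hψ01 x b₀ hb₀ with h | h
      · simp [h]
      · simp [h, this.le]
    refine ne_top_of_le_ne_top ?_ this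
    simp
  have hφb : Measurable (fun x => φ x b₀) :=
    hφm.comp (measurable_id.prodMk measurable_const)
  have hae := ae_eq_of_ae_le_of_lintegral_le (μ := Q)
    (Filter.Eventually.of_forall (hpt (fun _ => b₀))) hfin
    (((hφb.const_sub 1).const_mul (m b₀)).ennreal_ofReal.aemeasurable) (not_lt.mp hnlt)
  filter_upwards [hPQ.ae_le hae] with x hx
  have hmp := hm b₀ hb₀
  change φ x b₀ = g x
  have hgx := hg01 x
  rw [hψ0] at hx
  rcases hφ01 x b₀ hb₀ with h | h <;> rcases hgx with h' | h' <;> rw [h, h'] at hx ⊢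
  · simp at hx; linarith
  · simp at hx; linarith

end PostHocTesting
end

section
/- Let 𝒯 be a sub-σ-algebra of the Borel σ-field of 𝒳 such that the likelihood ratio Λ = dQ/dP is 𝒯-measurable. Let E be an e-variable for P and set S = E_P[E | 𝒯] (conditional expectation under P). Then S is an e-variable for P, and for every nonnegative concave function f : [0,∞) → ℝ such that f∘E and f∘S are Q-integrable, ∫ f(S) dQ ≥ ∫ f(E) dQ. In particular, ∫ log(S) dQ ≥ ∫ log(E) dQ whenever both integrals are defined. -/
open MeasureTheory
open scoped ENNReal

namespace PostHocTesting

variable {𝒳 : Type*} [MeasurableSpace 𝒳]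

open Filter Topology in
lemma conc_mono {f : ℝ → ℝ} (hf : ConcaveOn ℝ (Set.Ici 0) f)
    (hnn : ∀ y ∈ Set.Ici (0 : ℝ), 0 ≤ f y) {x y : ℝ} (hx : 0 ≤ x) (hxy : x ≤ y) :
    f x ≤ f y := by
  rcases hxy.eq_or_lt with rfl | hlt
  · exact le_rfl
  by_contra! hcon
  have hd : 0 < f x - f y := by linarith
  have hy : 0 ≤ f y := hnn y (by simp; linarith)
  set t := f y * (y - x) / (f x - f y) + 1 with ht
  have ht0 : 0 < t := by
    have : 0 ≤ f y * (y - x) / (f x - f y) :=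
      div_nonneg (mul_nonneg hy (by linarith)) hd.le
    linarith
  have htd : t * (f x - f y) = f y * (y - x) + (f x - f y) := by
    rw [ht]; field_simp
  have hz : 0 ≤ f (y + t) := hnn _ (by simp; linarith)
  have hpos : 0 < y + t - x := by linarith
  have h := hf.2 (show x ∈ Set.Ici (0 : ℝ) by simpa using hx)
    (show y + t ∈ Set.Ici (0 : ℝ) by simp; linarith)
    (show 0 ≤ t / (y + t - x) by positivity)
    (show 0 ≤ (y - x) / (y + t - x) from div_nonneg (by linarith) hpos.le) (by field_simp; ring)
  have he : (t / (y + t - x)) • x + ((y - x) / (y + t - x)) • (y + t) = y := by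
    simp only [smul_eq_mul]; field_simp; ring
  rw [he] at h
  simp only [smul_eq_mul] at h
  have h2 : t / (y + t - x) * f x ≤ f y := by
    have : 0 ≤ (y - x) / (y + t - x) * f (y + t) :=
      mul_nonneg (div_nonneg (by linarith) hpos.le) hz
    linarith
  rw [div_mul_eq_mul_div, div_le_iff₀ hpos] at h2
  nlinarith

lemma conc_bound {f : ℝ → ℝ} (hf : ConcaveOn ℝ (Set.Ici 0) f)
    (hnn : ∀ y ∈ Set.Ici (0 : ℝ), 0 ≤ f y) {y : ℝ} (hy : 0 ≤ y) :
    f y ≤ f 1 * (1 + y) := by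
  have h1 : 0 ≤ f 1 := hnn 1 (by simp)
  rcases le_total y 1 with h | h
  · have := conc_mono hf hnn hy h
    nlinarith
  · have hyp : 0 < y := by linarith
    have hc := hf.2 (show y ∈ Set.Ici (0 : ℝ) by simpa using hy)
      (show (0 : ℝ) ∈ Set.Ici (0 : ℝ) by simp) (show 0 ≤ 1 / y by positivity)
      (show 0 ≤ 1 - 1 / y by rw [sub_nonneg, div_le_one hyp]; exact h) (by ring)
    have he : (1 / y) • y + (1 - 1 / y) • (0 : ℝ) = 1 := by
      simp only [smul_eq_mul]; field_simp; ring
    rw [he] at hc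
    simp only [smul_eq_mul] at hc
    have h0 : 0 ≤ (1 - 1 / y) * f 0 :=
      mul_nonneg (by rw [sub_nonneg, div_le_one hyp]; exact h) (hnn 0 (by simp))
    have h3 : 1 / y * f y ≤ f 1 := by linarith
    rw [div_mul_eq_mul_div, one_mul, div_le_iff₀ hyp] at h3
    nlinarith

lemma conc_cont {f : ℝ → ℝ} (hf : ConcaveOn ℝ (Set.Ici 0) f) :
    ContinuousOn f (Set.Ioi 0) := by
  have := hf.continuousOn_interior
  rwa [interior_Ici] at this

section
variable {Ω : Type*} {m mΩ : MeasurableSpace Ω} {P : Measure Ω} [IsProbabilityMeasure P]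
  {E : Ω → ℝ}

lemma zero_on (hm : m ≤ mΩ) (hEi : Integrable E P) (hEnn : ∀ x, 0 ≤ E x) :
    ∀ᵐ x ∂P, (P[E|m]) x = 0 → E x = 0 := by
  have hA : MeasurableSet[m] {x | (P[E|m]) x = 0} :=
    stronglyMeasurable_condExp.measurable (measurableSet_singleton (0 : ℝ))
  have h := setIntegral_condExp hm hEi hA
  have h0 : ∫ x in {x | (P[E|m]) x = 0}, (P[E|m]) x ∂P = 0 := by
    rw [setIntegral_congr_fun (hm _ hA) (g := fun _ => (0 : ℝ)) (fun x hx => hx)]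
    simp
  rw [h0] at h
  have h2 := (setIntegral_eq_zero_iff_of_nonneg_ae (μ := P)
    (Filter.Eventually.of_forall hEnn) hEi.integrableOn).1 h.symm
  exact (ae_restrict_iff' (hm _ hA)).1 h2

lemma int_comp {f : ℝ → ℝ} (hf : ConcaveOn ℝ (Set.Ici 0) f)
    (hnn : ∀ y ∈ Set.Ici (0 : ℝ), 0 ≤ f y) (hEi : Integrable E P) (hEnn : ∀ x, 0 ≤ E x)
    (hfm : AEStronglyMeasurable (fun x => f (E x)) P) :
    Integrable (fun x => f (E x)) P := by
  refine Integrable.mono' (g := fun x => f 1 * (1 + E x))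
    (((integrable_const 1).add hEi).const_mul _) hfm (Filter.Eventually.of_forall fun x => ?_)
  rw [Real.norm_of_nonneg (hnn _ (hEnn x))]
  exact conc_bound hf hnn (hEnn x)

lemma conc_shift {f : ℝ → ℝ} (hf : ConcaveOn ℝ (Set.Ici 0) f) {ε : ℝ} (hε : 0 < ε) :
    ConcaveOn ℝ (Set.Ici 0) (fun y => f (y + ε)) := by
  have h := (hf.translate_left ε).subset (s := Set.Ici 0)
    (fun y hy => by simp at hy ⊢; linarith) (convex_Ici 0)
  exact h

open Filter Topology in
lemma jensen {f : ℝ → ℝ} (hm : m ≤ mΩ) (hf : ConcaveOn ℝ (Set.Ici 0) f)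
    (hnn : ∀ y ∈ Set.Ici (0 : ℝ), 0 ≤ f y) (hEm : Measurable E)
    (hEi : Integrable E P) (hEnn : ∀ x, 0 ≤ E x)
    (hfm : AEStronglyMeasurable (fun x => f (E x)) P) :
    ∀ᵐ x ∂P, (P[fun x => f (E x)|m]) x ≤ f ((P[E|m]) x) := by
  have hfi := int_comp hf hnn hEi hEnn hfm
  have hS : 0 ≤ᵐ[P] P[E|m] := condExp_nonneg (Eventually.of_forall hEnn)
  have step : ∀ n : ℕ, ∀ᵐ x ∂P,
      (P[fun x => f (E x)|m]) x ≤ f ((P[E|m]) x + 1 / ((n : ℝ) + 1)) := by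
    intro n
    set ε : ℝ := 1 / ((n : ℝ) + 1) with hε
    have hε0 : 0 < ε := by positivity
    have hc := conc_shift hf hε0
    have hnn' : ∀ y ∈ Set.Ici (0 : ℝ), 0 ≤ f (y + ε) := fun y hy =>
      hnn _ (by simp at hy ⊢; linarith)
    have hcont : ContinuousOn (fun y => f (y + ε)) (Set.Ici 0) :=
      (conc_cont hf).comp (by fun_prop) (fun y hy => by simp at hy ⊢; linarith)
    have hcm : Continuous (fun y => f (max y 0 + ε)) :=
      (conc_cont hf).comp_continuous (by fun_prop)
        (fun y => by have := le_max_right y 0; simp only [Set.mem_Ioi]; linarith)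
    have hm' : Measurable (fun x => f (E x + ε)) := by
      have := hcm.measurable.comp hEm
      convert this using 2 with x
      simp [max_eq_left (hEnn x)]
    have hi := int_comp hc hnn' hEi hEnn hm'.aestronglyMeasurable
    have hj := hc.condExp_map_le hm hcont.upperSemicontinuousOn
      (Eventually.of_forall hEnn) isClosed_Ici hEi hi
    have hmono := condExp_mono (m := m) hfi hi
      (Eventually.of_forall fun x => conc_mono hf hnn (hEnn x) (by linarith))
    filter_upwards [hj, hmono] with x h1 h2
    exact h2.trans h1
  have hA : MeasurableSet[m] {x | (P[E|m]) x = 0} :=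
    stronglyMeasurable_condExp.measurable (measurableSet_singleton (0 : ℝ))
  have hz : (P[fun x => f (E x) - f 0|m]) =ᵐ[P.restrict {x | (P[E|m]) x = 0}] 0 := by
    refine condExp_ae_eq_restrict_zero hA ?_
    refine (ae_restrict_iff' (hm _ hA)).2 ?_
    filter_upwards [zero_on hm hEi hEnn] with x hx hxA
    simp [hx hxA]
  rw [EventuallyEq, ae_restrict_iff' (hm _ hA)] at hz
  have hsub := condExp_sub hfi (integrable_const (f 0)) m
  rw [condExp_const hm] at hsub
  filter_upwards [ae_all_iff.2 step, hz, hsub, hS] with x h1 h2 h3 h4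
  rcases (show 0 ≤ (P[E|m]) x from h4).eq_or_lt with h0 | hpos
  · have h5 := h2 h0.symm
    have h6 : (P[fun x => f (E x)|m]) x - f 0 = 0 := h3.symm.trans h5
    rw [← h0]; linarith
  · have hca : ContinuousAt f ((P[E|m]) x) := (conc_cont hf).continuousAt (Ioi_mem_nhds hpos)
    have ht : Tendsto (fun n : ℕ => (P[E|m]) x + 1 / ((n : ℝ) + 1)) atTop (𝓝 ((P[E|m]) x)) := by
      simpa using tendsto_const_nhds.add (tendsto_one_div_add_atTop_nhds_zero_nat (𝕜 := ℝ))
    exact ge_of_tendsto' (hca.tendsto.comp ht) h1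

lemma main_ineq {Q : Measure Ω} [IsProbabilityMeasure Q] (hPQ : P ≪ Q) (hQP : Q ≪ P)
    {f : ℝ → ℝ} (hm : m ≤ mΩ) (hΛ : Measurable[m] (LR P Q))
    (hf : ConcaveOn ℝ (Set.Ici 0) f)
    (hnn : ∀ y ∈ Set.Ici (0 : ℝ), 0 ≤ f y) (hEm : Measurable E)
    (hEi : Integrable E P) (hEnn : ∀ x, 0 ≤ E x)
    (h1 : Integrable (fun x => f (E x)) Q) (h2 : Integrable (fun x => f ((P[E|m]) x)) Q) :
    ∫ x, f (E x) ∂Q ≤ ∫ x, f ((P[E|m]) x) ∂Q := by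
  have hfm : AEStronglyMeasurable (fun x => f (E x)) P := h1.aestronglyMeasurable.mono_ac hPQ
  have hfi := int_comp hf hnn hEi hEnn hfm
  have hj := jensen hm hf hnn hEm hEi hEnn hfm
  have h1' := (integrable_rnDeriv_smul_iff hQP).2 h1
  have h2' := (integrable_rnDeriv_smul_iff hQP).2 h2
  have hpull := condExp_mul_of_stronglyMeasurable_left (μ := P) (f := LR P Q)
    (g := fun x => f (E x)) hΛ.stronglyMeasurable h1' hfi
  rw [← integral_rnDeriv_smul hQP, ← integral_rnDeriv_smul hQP,
    ← integral_condExp hm (f := fun x => (Q.rnDeriv P x).toReal • f (E x))]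
  refine integral_mono_ae integrable_condExp h2' ?_
  filter_upwards [hpull, hj] with x hx hjx
  refine hx.le.trans ?_
  exact mul_le_mul_of_nonneg_left hjx ENNReal.toReal_nonneg

lemma log_bd {y ε : ℝ} (hy : 0 < y) (h0 : 0 < ε) (h1 : ε ≤ 1) :
    ‖Real.log (y + ε)‖ ≤ |Real.log y| + Real.log 2 := by
  have hl2 : 0 < Real.log 2 := Real.log_pos (by norm_num)
  have hlow : Real.log y ≤ Real.log (y + ε) := Real.log_le_log hy (by linarith)
  rw [Real.norm_eq_abs, abs_le]
  constructor
  · have := neg_abs_le (Real.log y); linarith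
  · rcases le_total y 1 with h | h
    · have := Real.log_le_log (show 0 < y + ε by linarith) (show y + ε ≤ 2 by linarith)
      have := abs_nonneg (Real.log y); linarith
    · have := Real.log_le_log (show 0 < y + ε by linarith) (show y + ε ≤ y * 2 by linarith)
      rw [Real.log_mul (by linarith) (by norm_num)] at this
      have := le_abs_self (Real.log y); linarith

lemma log_int {Q : Measure Ω} [IsProbabilityMeasure Q] {g : Ω → ℝ}
    (hg : AEMeasurable g Q) (hpos : ∀ᵐ x ∂Q, 0 < g x)
    (hi : Integrable (fun x => Real.log (g x)) Q) {ε : ℝ} (h0 : 0 < ε) (h1 : ε ≤ 1) :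
    Integrable (fun x => Real.log (g x + ε)) Q := by
  refine Integrable.mono' (hi.abs.add (integrable_const (Real.log 2)))
    (Real.measurable_log.comp_aemeasurable (hg.add_const ε)).aestronglyMeasurable ?_
  filter_upwards [hpos] with x hx
  exact log_bd hx h0 h1

open Filter Topology in
lemma log_ineq {Q : Measure Ω} [IsProbabilityMeasure Q] (hPQ : P ≪ Q) (hQP : Q ≪ P)
    (hm : m ≤ mΩ) (hΛ : Measurable[m] (LR P Q)) (hEm : Measurable E)
    (hEi : Integrable E P) (hEnn : ∀ x, 0 ≤ E x) (hEpos : ∀ᵐ x ∂P, 0 < E x)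
    (h1 : Integrable (fun x => Real.log (E x)) Q)
    (h2 : Integrable (fun x => Real.log ((P[E|m]) x)) Q) :
    ∫ x, Real.log (E x) ∂Q ≤ ∫ x, Real.log ((P[E|m]) x) ∂Q := by
  have hS : 0 ≤ᵐ[P] P[E|m] := condExp_nonneg (Eventually.of_forall hEnn)
  have hSpos : ∀ᵐ x ∂P, 0 < (P[E|m]) x := by
    filter_upwards [hS, hEpos, zero_on hm hEi hEnn] with x a b c
    rcases (show 0 ≤ (P[E|m]) x from a).eq_or_lt with h | h
    · exact absurd (c h.symm) b.ne'
    · exact h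
  have hSm : Measurable (P[E|m]) := (stronglyMeasurable_condExp.mono hm).measurable
  have hEQ := hQP.ae_le hEpos
  have hSQ := hQP.ae_le hSpos
  have step : ∀ n : ℕ, ∫ x, Real.log (E x) ∂Q
      ≤ ∫ x, Real.log ((P[E|m]) x + 1 / ((n : ℝ) + 1)) ∂Q := by
    intro n
    set ε : ℝ := 1 / ((n : ℝ) + 1) with hε
    have hε0 : 0 < ε := by positivity
    have hε1 : ε ≤ 1 := by
      rw [hε, div_le_one (by positivity)]; linarith [n.cast_nonneg (α := ℝ)]
    have i1 := log_int hEm.aemeasurable hEQ h1 hε0 hε1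
    have i2 := log_int hSm.aemeasurable hSQ h2 hε0 hε1
    have hcl : ConcaveOn ℝ (Set.Ici 0) (fun y => Real.log (y + ε)) := by
      have h := (strictConcaveOn_log_Ioi.concaveOn.translate_left ε).subset (s := Set.Ici 0)
        (fun y hy => by simp at hy ⊢; linarith) (convex_Ici 0)
      exact h
    have hc : ConcaveOn ℝ (Set.Ici 0) (fun y => Real.log (y + ε) + -Real.log ε) :=
      hcl.add_const _
    have hnn : ∀ y ∈ Set.Ici (0 : ℝ), 0 ≤ Real.log (y + ε) + -Real.log ε := by
      intro y hy
      have : Real.log ε ≤ Real.log (y + ε) :=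
        Real.log_le_log hε0 (by simp at hy; linarith)
      linarith
    have key := main_ineq hPQ hQP hm hΛ hc hnn hEm hEi hEnn
      (i1.add (integrable_const _)) (i2.add (integrable_const _))
    rw [integral_add i1 (integrable_const _), integral_add i2 (integrable_const _)] at key
    have hmono : ∫ x, Real.log (E x) ∂Q ≤ ∫ x, Real.log (E x + ε) ∂Q := by
      refine integral_mono_ae h1 i1 ?_
      filter_upwards [hEQ] with x hx
      exact Real.log_le_log hx (by linarith)
    linarith
  have hlim : Tendsto (fun n : ℕ => ∫ x, Real.log ((P[E|m]) x + 1 / ((n : ℝ) + 1)) ∂Q) atTop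
      (𝓝 (∫ x, Real.log ((P[E|m]) x) ∂Q)) := by
    refine tendsto_integral_of_dominated_convergence
      (fun x => |Real.log ((P[E|m]) x)| + Real.log 2)
      (fun n => (Real.measurable_log.comp (hSm.add_const _)).aestronglyMeasurable)
      (h2.abs.add (integrable_const _)) (fun n => ?_) ?_
    · filter_upwards [hSQ] with x hx
      refine log_bd hx (by positivity) ?_
      rw [div_le_one (by positivity)]; linarith [n.cast_nonneg (α := ℝ)]
    · filter_upwards [hSQ] with x hx
      have ht : Tendsto (fun n : ℕ => (P[E|m]) x + 1 / ((n : ℝ) + 1)) atTop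
          (𝓝 ((P[E|m]) x)) := by
        simpa using tendsto_const_nhds.add (tendsto_one_div_add_atTop_nhds_zero_nat (𝕜 := ℝ))
      exact (Real.continuousAt_log hx.ne').tendsto.comp ht
  exact ge_of_tendsto' hlim step

end

/-- for a sub-σ-algebra `𝒯` making the likelihood ratio measurable and an
e-variable `E` for `P`, `S = E_P[E | 𝒯]` is an e-variable for `P` and
`∫ f(S) dQ ≥ ∫ f(E) dQ` for every nonnegative concave `f` (with both integrals
defined); in particular for `f = log`. -/
theorem stmt11 {Ω : Type*} (𝒯 : MeasurableSpace Ω)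
    [mΩ : MeasurableSpace Ω] [StandardBorelSpace Ω]
    (P Q : Measure Ω) [IsProbabilityMeasure P] [IsProbabilityMeasure Q]
    (hPQ : P ≪ Q) (hQP : Q ≪ P)
    (h𝒯 : 𝒯 ≤ mΩ)
    (hΛ : Measurable[𝒯] (LR P Q))
    (E : Ω → ℝ) (hEmeas : Measurable E) (hEnn : ∀ x, 0 ≤ E x)
    (hEev : ∫⁻ x, ENNReal.ofReal (E x) ∂P ≤ 1) :
    (0 ≤ᵐ[P] (P[E|𝒯])) ∧
    (∫⁻ x, ENNReal.ofReal ((P[E|𝒯]) x) ∂P ≤ 1) ∧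
    (∀ f : ℝ → ℝ, ConcaveOn ℝ (Set.Ici 0) f → (∀ y ∈ Set.Ici (0 : ℝ), 0 ≤ f y) →
      Integrable (fun x => f (E x)) Q → Integrable (fun x => f ((P[E|𝒯]) x)) Q →
      ∫ x, f (E x) ∂Q ≤ ∫ x, f ((P[E|𝒯]) x) ∂Q) ∧
    ((∀ᵐ x ∂P, 0 < E x) →
      Integrable (fun x => Real.log (E x)) Q →
      Integrable (fun x => Real.log ((P[E|𝒯]) x)) Q →
      ∫ x, Real.log (E x) ∂Q ≤ ∫ x, Real.log ((P[E|𝒯]) x) ∂Q) := by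
  have hEi : Integrable E P := by
    refine ⟨hEmeas.aestronglyMeasurable, ?_⟩
    rw [hasFiniteIntegral_iff_ofReal (Filter.Eventually.of_forall hEnn)]
    exact hEev.trans_lt ENNReal.one_lt_top
  have hS : 0 ≤ᵐ[P] P[E|𝒯] := condExp_nonneg (Filter.Eventually.of_forall hEnn)
  refine ⟨hS, ?_, ?_, ?_⟩
  · rw [← ofReal_integral_eq_lintegral_ofReal integrable_condExp hS, integral_condExp h𝒯,
      ofReal_integral_eq_lintegral_ofReal hEi (Filter.Eventually.of_forall hEnn)]
    exact hEev
  · intro f hf hnn h1 h2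
    exact main_ineq hPQ hQP h𝒯 hΛ hf hnn hEmeas hEi hEnn h1 h2
  · intro hpos h1 h2
    exact log_ineq hPQ hQP h𝒯 hΛ hEmeas hEi hEnn hpos h1 h2

end PostHocTesting
end

section
/- Assume P and Q are continuous (the distribution of Λ under P is atomless). If a binary test family φ is 𝐂-admissible among binary test families, then E_φ is an increasing function of the likelihood ratio P-almost surely: there exists a P-null set N ⊆ 𝒳 such that for all x, y ∉ N, Λ(x) ≤ Λ(y) implies E_φ(x) ≤ E_φ(y). Consequently, for each fixed b ∈ ℬ, φ(·,b) is an increasing function of Λ P-almost surely. -/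
open MeasureTheory
open scoped ENNReal

namespace PostHocTesting

variable {𝒳 : Type*} [MeasurableSpace 𝒳]

/-- ENNReal comparison of integrals through tails. -/
lemma lintegral_le_of_tails (P : Measure 𝒳) [IsProbabilityMeasure P] (f g : 𝒳 → ℝ≥0∞)
    (hf : Measurable f) (hg : Measurable g)
    (h : ∀ t : ℝ≥0∞, P {x | t < f x} ≤ P {x | t < g x}) :
    ∫⁻ x, f x ∂P ≤ ∫⁻ x, g x ∂P := by
  have key : ∀ (f : 𝒳 → ℝ≥0∞), Measurable f → ∀ n : ℕ, ∫⁻ x, min (f x) n ∂P =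
      ∫⁻ t in Set.Ioi (0:ℝ), P {x | ENNReal.ofReal t < min (f x) n} := by
    intro f hf n
    have h1 : ∀ x, min (f x) n = ENNReal.ofReal ((min (f x) n).toReal) := by
      intro x
      rw [ENNReal.ofReal_toReal]
      exact ne_top_of_le_ne_top (ENNReal.natCast_ne_top n) (min_le_right _ _)
    calc ∫⁻ x, min (f x) n ∂P = ∫⁻ x, ENNReal.ofReal ((min (f x) n).toReal) ∂P := by
          exact lintegral_congr h1
      _ = _ := by
        rw [lintegral_eq_lintegral_meas_lt P (Filter.Eventually.of_forall fun x => by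
          simp only [Pi.zero_apply]; exact ENNReal.toReal_nonneg)
          (by fun_prop)]
        refine setLIntegral_congr_fun measurableSet_Ioi ?_
        intro t ht
        show P _ = P _
        congr 1
        ext x
        simp only [Set.mem_ofPred_eq]
        rw [ENNReal.ofReal_lt_iff_lt_toReal (le_of_lt ht)]
        exact ne_top_of_le_ne_top (ENNReal.natCast_ne_top n) (min_le_right _ _)
  have hsup : ∀ x, f x = ⨆ n : ℕ, min (f x) n := by
    intro x
    have : (⨆ n : ℕ, min (f x) (n:ℝ≥0∞)) = min (f x) (⨆ n : ℕ, (n : ℝ≥0∞)) := by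
      exact (inf_iSup_eq _ _).symm
    rw [this, ENNReal.iSup_natCast]; simp
  rw [lintegral_congr hsup, lintegral_iSup (fun n => by fun_prop)
    (fun a b hab x => by
      simp only
      exact min_le_min_left _ (by exact_mod_cast hab))]
  refine iSup_le fun n => ?_
  refine le_trans ?_ (lintegral_mono (fun x => min_le_left (g x) (n:ℝ≥0∞)))
  rw [key f hf, key g hg]
  refine lintegral_mono fun t => ?_
  simp only [lt_min_iff]
  by_cases htn : ENNReal.ofReal t < n
  · simpa [htn] using h _
  · simp [htn]

/-- Structure of the super-level sets of the tail function of an atomless law. -/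
lemma tail_set (μ : Measure ℝ) [IsProbabilityMeasure μ] [NullSingletonClass μ] (g : ℝ≥0∞) (hg : g ≤ 1) :
    μ {c | μ (Set.Ioi c) ≤ g} = g ∧
    ({c | μ (Set.Ioi c) ≤ g} = ∅ ∨ {c | μ (Set.Ioi c) ≤ g} = Set.univ ∨
      ∃ c₀, {c | μ (Set.Ioi c) ≤ g} = Set.Ici c₀) := by
  set K : Set ℝ := {c | μ (Set.Ioi c) ≤ g} with hK
  have hup : ∀ a b, a ≤ b → a ∈ K → b ∈ K := fun a b hab ha =>
    le_trans (measure_mono (Set.Ioi_subset_Ioi hab)) ha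
  rcases K.eq_empty_or_nonempty with he | hne
  · refine ⟨?_, Or.inl he⟩
    have h1 : Filter.Tendsto (fun n : ℕ => μ (Set.Ioi (n:ℝ))) Filter.atTop (nhds 0) := by
      have : (0:ℝ≥0∞) = μ (⋂ n : ℕ, Set.Ioi (n:ℝ)) := by
        rw [show (⋂ n : ℕ, Set.Ioi (n:ℝ)) = ∅ from ?_]; · simp
        ext x
        simp only [Set.mem_iInter, Set.mem_Ioi, Set.mem_empty_iff_false, iff_false, not_forall, not_lt]
        exact exists_nat_ge x
      rw [this]
      refine tendsto_measure_iInter_atTop (fun n => measurableSet_Ioi.nullMeasurableSet) ?_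
        ⟨0, measure_ne_top _ _⟩
      intro a b hab
      exact Set.Ioi_subset_Ioi (by exact_mod_cast hab)
    have : g ≤ 0 := ge_of_tendsto' h1 fun n => by
      have : (n:ℝ) ∉ K := by rw [he]; simp
      exact (not_le.1 this).le
    rw [he]; simp [le_antisymm this (zero_le)]
  by_cases hb : BddBelow K
  · set c₀ := sInf K with hc
    have hgt : ∀ c, c₀ < c → c ∈ K := by
      intro c hcc
      obtain ⟨a, ha, hac⟩ := exists_lt_of_csInf_lt hne hcc
      exact hup a c hac.le ha
    have hlt : ∀ c, c < c₀ → c ∉ K := fun c hcc hcK => absurd (csInf_le hb hcK) (not_le.2 hcc)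
    have hu : Filter.Tendsto (fun n : ℕ => (1:ℝ)/((n:ℝ)+1)) Filter.atTop (nhds 0) :=
      tendsto_one_div_add_atTop_nhds_zero_nat
    have hanti : Antitone (fun n : ℕ => (1:ℝ)/((n:ℝ)+1)) := by
      intro a b hab
      exact Nat.one_div_le_one_div hab
    have hmem : c₀ ∈ K := by
      have h1 : Filter.Tendsto (fun n : ℕ => μ (Set.Ioi (c₀ + 1/((n:ℝ)+1)))) Filter.atTop
          (nhds (μ (Set.Ioi c₀))) := by
        rw [show Set.Ioi c₀ = ⋃ n : ℕ, Set.Ioi (c₀ + 1/((n:ℝ)+1)) from ?_]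
        · refine tendsto_measure_iUnion_atTop ?_
          intro a b hab
          exact Set.Ioi_subset_Ioi (by have := hanti hab; simp only at this; linarith)
        · ext x
          simp only [Set.mem_iUnion, Set.mem_Ioi]
          constructor
          · intro hx
            obtain ⟨n, hn⟩ := exists_nat_one_div_lt (sub_pos.2 hx)
            exact ⟨n, by linarith⟩
          · rintro ⟨n, hn⟩
            have : (0:ℝ) < 1/((n:ℝ)+1) := by positivity
            linarith
      exact le_of_tendsto' h1 fun n => hgt _ (by
        have : (0:ℝ) < 1/((n:ℝ)+1) := by positivity
        linarith)
    have hKI : K = Set.Ici c₀ := by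
      ext c
      constructor
      · intro h; exact csInf_le hb h
      · intro h; exact hup c₀ c h hmem
    refine ⟨?_, Or.inr (Or.inr ⟨c₀, hKI⟩)⟩
    rw [hKI]
    apply le_antisymm
    · rw [← measure_congr (Ioi_ae_eq_Ici (μ := μ) (a := c₀))]
      exact hmem
    · have h1 : Filter.Tendsto (fun n : ℕ => μ (Set.Ioi (c₀ - 1/((n:ℝ)+1)))) Filter.atTop
          (nhds (μ (Set.Ici c₀))) := by
        rw [show Set.Ici c₀ = ⋂ n : ℕ, Set.Ioi (c₀ - 1/((n:ℝ)+1)) from ?_]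
        · refine tendsto_measure_iInter_atTop (fun n => measurableSet_Ioi.nullMeasurableSet) ?_
            ⟨0, measure_ne_top _ _⟩
          intro a b hab
          exact Set.Ioi_subset_Ioi (by have := hanti hab; simp only at this; linarith)
        · ext x
          simp only [Set.mem_iInter, Set.mem_Ioi, Set.mem_Ici]
          constructor
          · intro hx n
            have : (0:ℝ) < 1/((n:ℝ)+1) := by positivity
            linarith
          · intro hx
            by_contra hcon
            obtain ⟨n, hn⟩ := exists_nat_one_div_lt (sub_pos.2 (not_le.1 hcon))
            have := hx n
            linarith
      exact ge_of_tendsto' h1 fun n => (not_le.1 (hlt _ (by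
        have : (0:ℝ) < 1/((n:ℝ)+1) := by positivity
        linarith))).le
  · have hKu : K = Set.univ := by
      ext c
      simp only [Set.mem_univ, iff_true]
      by_contra hcK
      apply hb
      refine ⟨c, fun a ha => ?_⟩
      by_contra hac
      exact hcK (hup a c (not_le.1 hac).le ha)
    refine ⟨?_, Or.inr (Or.inl hKu)⟩
    have h1 : Filter.Tendsto (fun n : ℕ => μ (Set.Ioi (-(n:ℝ)))) Filter.atTop (nhds 1) := by
      rw [← measure_univ (μ := μ), show (Set.univ : Set ℝ) = ⋃ n : ℕ, Set.Ioi (-(n:ℝ)) from ?_]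
      · refine tendsto_measure_iUnion_atTop ?_
        intro a b hab
        exact Set.Ioi_subset_Ioi (by simpa using hab)
      · ext x
        simp only [Set.mem_univ, Set.mem_iUnion, Set.mem_Ioi, true_iff]
        obtain ⟨n, hn⟩ := exists_nat_gt (-x)
        exact ⟨n, by linarith⟩
    have : (1:ℝ≥0∞) ≤ g := le_of_tendsto' h1 fun n => by
      have : (-(n:ℝ)) ∈ K := by rw [hKu]; trivial
      exact this
    rw [hKu, measure_univ]
    exact le_antisymm this hg

/-- Neyman–Pearson with uniqueness. -/
lemma neyman_pearson (P Q : Measure 𝒳) [IsProbabilityMeasure P] [IsProbabilityMeasure Q]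
    (hQP : Q ≪ P) (S : Set 𝒳) (hS : MeasurableSet S) (c : ℝ)
    (hST : P S = P {x | c ≤ LR P Q x}) :
    Q S ≤ Q {x | c ≤ LR P Q x} ∧
    (Q {x | c ≤ LR P Q x} ≤ Q S → P (S \ {x | c ≤ LR P Q x}) = 0) := by
  set T : Set 𝒳 := {x | c ≤ LR P Q x} with hTdef
  have hLR : Measurable (LR P Q) := (Measure.measurable_rnDeriv Q P).ennreal_toReal
  have hT : MeasurableSet T := measurableSet_le measurable_const hLR
  have hd : P (S \ T) = P (T \ S) := by
    have h1 := measure_sdiff_add_inter (μ := P) S hT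
    have h2 := measure_sdiff_add_inter (μ := P) T hS
    rw [Set.inter_comm] at h2
    rw [← h1, ← h2] at hST
    exact (ENNReal.add_left_inj (measure_ne_top _ _)).1 hST
  have hlow : ENNReal.ofReal c * P (T \ S) ≤ Q (T \ S) := by
    rw [← Measure.setLIntegral_rnDeriv hQP, ← setLIntegral_const]
    refine setLIntegral_mono' (hT.diff hS) fun x hx => ?_
    exact ENNReal.ofReal_le_of_le_toReal hx.1
  have hstr : P (S \ T) ≠ 0 → Q (S \ T) < ENNReal.ofReal c * P (S \ T) := by
    intro hne
    rw [← Measure.setLIntegral_rnDeriv hQP, ← setLIntegral_const]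
    refine setLIntegral_strict_mono (hS.diff hT) hne measurable_const ?_ ?_
    · rw [Measure.setLIntegral_rnDeriv hQP]; exact measure_ne_top _ _
    · filter_upwards [Measure.rnDeriv_lt_top Q P] with x hx hxs
      have : LR P Q x < c := not_le.1 hxs.2
      exact (ENNReal.lt_ofReal_iff_toReal_lt hx.ne).2 this
  have hdq : Q (S \ T) ≤ Q (T \ S) := by
    by_cases h0 : P (S \ T) = 0
    · rw [hQP h0]; exact zero_le
    · exact (hstr h0).le.trans (hd ▸ hlow)
  have h1 := measure_sdiff_add_inter (μ := Q) S hT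
  have h2 := measure_sdiff_add_inter (μ := Q) T hS
  rw [Set.inter_comm] at h2
  rw [← h1, ← h2]
  refine ⟨by gcongr, fun h => ?_⟩
  have h3 := (ENNReal.add_le_add_iff_right (measure_ne_top _ _)).1 h
  by_contra hne
  have := (hstr hne).trans_le (hd ▸ hlow)
  exact absurd h3 (not_le.2 this)

/-- A countable subset of `ℬ` detecting gaps. -/
lemma countable_detect (ℬ : Set ℝ) (ℓ : ℝ → ℝ) :
    ∃ C ⊆ ℬ, C.Countable ∧ ∀ b ∈ ℬ, ∀ t : ℝ≥0∞, t < ENNReal.ofReal (ℓ b) →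
      ∃ c ∈ C, t < ENNReal.ofReal (ℓ c) ∧ ℓ c ≤ ℓ b := by
  have step : ∀ A : Set ℝ, ∃ D ⊆ A, D.Countable ∧ ∀ b ∈ A, ∃ d ∈ D, ℓ d ≤ ℓ b := by
    intro A
    by_cases hmin : ∃ a ∈ A, ∀ b ∈ A, ℓ a ≤ ℓ b
    · obtain ⟨a, ha, h⟩ := hmin
      exact ⟨{a}, by simpa using ha, Set.countable_singleton a, fun b hb => ⟨a, rfl, h b hb⟩⟩
    · push Not at hmin
      obtain ⟨T, hTA, hTc, hTe⟩ := TopologicalSpace.isOpen_biUnion_countable A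
        (fun a => Set.Ioi (ℓ a)) (fun _ _ => isOpen_Ioi)
      refine ⟨T, hTA, hTc, fun b hb => ?_⟩
      obtain ⟨a, ha, hab⟩ := hmin b hb
      have : ℓ b ∈ ⋃ i ∈ A, Set.Ioi (ℓ i) := Set.mem_biUnion ha hab
      rw [← hTe] at this
      simp only [Set.mem_iUnion, Set.mem_Ioi, exists_prop] at this
      obtain ⟨d, hd, hdb⟩ := this
      exact ⟨d, hd, hdb.le⟩
  choose D hDA hDc hD using fun q : ℚ => step {b | b ∈ ℬ ∧ (q:ℝ) < ℓ b}
  refine ⟨⋃ q, D q, Set.iUnion_subset fun q b hb => (hDA q hb).1,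
    Set.countable_iUnion hDc, fun b hb t ht => ?_⟩
  have htop : t ≠ ⊤ := ht.ne_top
  obtain ⟨q, hq1, hq2⟩ := exists_rat_btwn ((ENNReal.lt_ofReal_iff_toReal_lt htop).1 ht)
  obtain ⟨d, hd, hdb⟩ := hD q b ⟨hb, hq2⟩
  refine ⟨d, Set.mem_iUnion.2 ⟨q, hd⟩, ?_, hdb⟩
  exact (ENNReal.lt_ofReal_iff_toReal_lt htop).2 (hq1.trans (hDA q hd).2)

/-- Type-II risk of a binary family against a constant adversary. -/
lemma typeII_const (Q : Measure 𝒳) (ℬ : Set ℝ) (m : ℝ → ℝ) (δ : 𝒳 → ℝ → ℝ)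
    (hδ : Measurable (fun p : 𝒳 × ℝ => δ p.1 p.2))
    (hb : ∀ x : 𝒳, ∀ b ∈ ℬ, δ x b = 0 ∨ δ x b = 1) (b : ℝ) (hbB : b ∈ ℬ) :
    typeIIRisk Q m δ (fun _ => b) = ENNReal.ofReal (m b) * Q {x | δ x b = 1}ᶜ := by
  have hms : MeasurableSet {x | δ x b = 1} :=
    (hδ.comp (measurable_id.prodMk measurable_const)) (measurableSet_singleton 1)
  unfold typeIIRisk
  rw [← lintegral_indicator_const hms.compl]
  refine lintegral_congr fun x => ?_
  rcases hb x b hbB with h | h <;> simp [h, Set.indicator]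

/-- when the likelihood ratio is atomless under `P`, the e-value of any
`𝐂`-admissible binary test family is an increasing function of the likelihood ratio
`P`-a.s.; consequently, for each fixed `b ∈ ℬ`, `φ(·,b)` is an increasing function of
the likelihood ratio `P`-a.s. -/
theorem stmt16
    [StandardBorelSpace 𝒳]
    (P Q : Measure 𝒳) [IsProbabilityMeasure P] [IsProbabilityMeasure Q]
    (hPQ : P ≪ Q) (hQP : Q ≪ P)
    (ℬ : Set ℝ) (hℬne : ℬ.Nonempty)
    (ℓ : ℝ → ℝ) (hℓmeas : Measurable ℓ) (hℓpos : ∀ b ∈ ℬ, 0 < ℓ b)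
    (hℓmono : ∀ b₁ ∈ ℬ, ∀ b₂ ∈ ℬ, b₁ ≤ b₂ → ℓ b₁ ≤ ℓ b₂)
    (hℓgt1 : ∃ b ∈ ℬ, 1 < ℓ b)
    (m : ℝ → ℝ) (hm : ∀ b ∈ ℬ, 0 < m b)
    (hcont : AtomlessLR P Q)
    (φ : 𝒳 → ℝ → ℝ) (hφ : IsBinaryTestFamily ℬ ℓ φ)
    (hadm : AdmissibleBinary P Q ℬ ℓ m (ConstAdv 𝒳 ℬ) φ) :
    (∃ N : Set 𝒳, P N = 0 ∧
      ∀ x ∉ N, ∀ y ∉ N, LR P Q x ≤ LR P Q y → Esup ℬ ℓ φ x ≤ Esup ℬ ℓ φ y) ∧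
    (∀ b ∈ ℬ, ∃ N : Set 𝒳, P N = 0 ∧
      ∀ x ∉ N, ∀ y ∉ N, LR P Q x ≤ LR P Q y → φ x b ≤ φ y b) := by
  classical
  obtain ⟨⟨hφm, hφ01, hEm⟩, hφb⟩ := hφ
  obtain ⟨hsafe, hnot⟩ := hadm
  have hLR : Measurable (LR P Q) := (Measure.measurable_rnDeriv Q P).ennreal_toReal
  set E := Esup ℬ ℓ φ with hE
  set μ : Measure ℝ := P.map (LR P Q) with hμ
  have : IsProbabilityMeasure μ := Measure.isProbabilityMeasure_map hLR.aemeasurable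
  have : NullSingletonClass μ := ⟨fun c => by
    rw [hμ, Measure.map_apply hLR (measurableSet_singleton c)]
    exact hcont c⟩
  let H : ℝ → ℝ≥0∞ := fun c => μ (Set.Ioi c)
  have hHanti : Antitone H := fun a b hab => measure_mono (Set.Ioi_subset_Ioi hab)
  have hHm : Measurable H := hHanti.measurable
  let G : ℝ≥0∞ → ℝ≥0∞ := fun t => P {x | t ≤ E x}
  have hGanti : Antitone G := fun a b hab => measure_mono fun x hx => le_trans hab hx
  have hGm : Measurable G := hGanti.measurable
  let T : ℝ≥0∞ → Set 𝒳 := fun g => {x | H (LR P Q x) ≤ g}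
  have hTm : ∀ g, MeasurableSet (T g) := fun g =>
    measurableSet_le (hHm.comp hLR) measurable_const
  have hKm : ∀ g, MeasurableSet {c | H c ≤ g} := fun g => measurableSet_le hHm measurable_const
  have hPT : ∀ g ≤ 1, P (T g) = g := by
    intro g hg
    have h := (tail_set μ g hg).1
    rwa [hμ, Measure.map_apply hLR (hKm g)] at h
  have hTup : ∀ g x y, LR P Q x ≤ LR P Q y → x ∈ T g → y ∈ T g := fun g x y hxy hx =>
    le_trans (hHanti hxy) hx
  have hSm : ∀ t : ℝ≥0∞, MeasurableSet {x | t ≤ E x} := fun t =>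
    measurableSet_le measurable_const hEm
  -- Neyman–Pearson
  have hNP : ∀ t : ℝ≥0∞, Q {x | t ≤ E x} ≤ Q (T (G t)) ∧
      (Q (T (G t)) ≤ Q {x | t ≤ E x} → {x | t ≤ E x} =ᵐ[P] T (G t)) := by
    intro t
    have hG1 : G t ≤ 1 := prob_le_one
    have hp := hPT _ hG1
    have triv : {x | t ≤ E x} =ᵐ[P] T (G t) → Q {x | t ≤ E x} ≤ Q (T (G t)) ∧
      (Q (T (G t)) ≤ Q {x | t ≤ E x} → {x | t ≤ E x} =ᵐ[P] T (G t)) := fun h =>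
      ⟨(measure_congr (hQP.ae_le h)).le, fun _ => h⟩
    have hpre : T (G t) = LR P Q ⁻¹' {c | μ (Set.Ioi c) ≤ G t} := rfl
    rcases (tail_set μ (G t) hG1).2 with h | h | ⟨c, h⟩
    · apply triv
      rw [hpre, h, Set.preimage_empty]
      rw [hpre, h, Set.preimage_empty, measure_empty] at hp
      exact ae_eq_empty.2 hp.symm
    · apply triv
      rw [hpre, h, Set.preimage_univ]
      rw [hpre, h, Set.preimage_univ, measure_univ] at hp
      exact ae_eq_univ.2 ((prob_compl_eq_zero_iff (hSm t)).2 hp.symm)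
    · have hT : T (G t) = {x | c ≤ LR P Q x} := by rw [hpre, h]; rfl
      have hnp := neyman_pearson P Q hQP _ (hSm t) c (by rw [← hT]; exact hp.symm)
      rw [← hT] at hnp
      refine ⟨hnp.1, fun hle => ?_⟩
      exact ae_eq_of_ae_subset_of_measure_ge (ae_le_set.2 (hnp.2 hle)) hp.le
        (hSm t).nullMeasurableSet (measure_ne_top _ _)
  -- the competitor
  let ψ : 𝒳 → ℝ → ℝ := fun x b => if H (LR P Q x) ≤ G (ENNReal.ofReal (ℓ b)) then 1 else 0
  have hψm : Measurable (fun p : 𝒳 × ℝ => ψ p.1 p.2) := by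
    refine Measurable.ite ?_ measurable_const measurable_const
    refine measurableSet_le (hHm.comp (hLR.comp measurable_fst)) ?_
    exact hGm.comp (ENNReal.measurable_ofReal.comp (hℓmeas.comp measurable_snd))
  have hψb : ∀ x : 𝒳, ∀ b ∈ ℬ, ψ x b = 0 ∨ ψ x b = 1 := by
    intro x b _
    by_cases h : H (LR P Q x) ≤ G (ENNReal.ofReal (ℓ b)) <;> simp [ψ, h]
  have hψE : Measurable (Esup ℬ ℓ ψ) := by
    let k : ℝ≥0∞ → ℝ≥0∞ := fun u => ⨆ b : ℬ, ENNReal.ofReal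
      (ℓ (b:ℝ) * if u ≤ G (ENNReal.ofReal (ℓ b)) then 1 else 0)
    have hk : Antitone k := by
      intro u v huv
      refine iSup_mono fun b => ENNReal.ofReal_le_ofReal ?_
      have := hℓpos b b.2
      by_cases h : v ≤ G (ENNReal.ofReal (ℓ b))
      · simp [h, huv.trans h]
      · rw [if_neg h, mul_zero]
        split_ifs <;> simp [this.le]
    exact hk.measurable.comp (hHm.comp hLR)
  have hψfam : IsBinaryTestFamily ℬ ℓ ψ := by
    refine ⟨⟨hψm, fun x b hb => ?_, hψE⟩, hψb⟩
    rcases hψb x b hb with h | h <;> simp [h]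
  have hψsafe : RiskSafe P ℬ ℓ ψ := by
    refine le_trans ?_ hsafe
    refine lintegral_le_of_tails P _ _ hψE hEm fun t => ?_
    rw [← hPT (P {x | t < Esup ℬ ℓ φ x}) prob_le_one]
    refine measure_mono fun x hx => ?_
    have hx : t < Esup ℬ ℓ ψ x := hx
    obtain ⟨b, hb⟩ := lt_iSup_iff.1 hx
    by_cases h : H (LR P Q x) ≤ G (ENNReal.ofReal (ℓ b))
    · refine le_trans h (measure_mono fun y hy => ?_)
      simp only [ψ, h, if_true, mul_one] at hb
      exact lt_of_lt_of_le hb hy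
    · simp [ψ, h] at hb
  have hφS : ∀ b ∈ ℬ, {x | φ x b = 1} ⊆ {x | ENNReal.ofReal (ℓ b) ≤ E x} := by
    intro b hb x hx
    have hx : φ x b = 1 := hx
    have := le_iSup (fun b : ℬ => ENNReal.ofReal (ℓ (b : ℝ) * φ x (b : ℝ))) ⟨b, hb⟩
    simp only [hx, mul_one] at this
    exact this
  have hψT : ∀ b, {x | ψ x b = 1} = T (G (ENNReal.ofReal (ℓ b))) := by
    intro b
    ext x
    by_cases h : H (LR P Q x) ≤ G (ENNReal.ofReal (ℓ b)) <;> simp [ψ, h, T]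
  have hφsm : ∀ b, MeasurableSet {x | φ x b = 1} := fun b =>
    (hφm.comp (measurable_id.prodMk measurable_const)) (measurableSet_singleton 1)
  have hle : ∀ b ∈ ℬ, Q {x | φ x b = 1} ≤ Q (T (G (ENNReal.ofReal (ℓ b)))) := fun b hb =>
    (measure_mono (hφS b hb)).trans (hNP _).1
  -- admissibility
  have hge : ∀ b ∈ ℬ, Q (T (G (ENNReal.ofReal (ℓ b)))) ≤ Q {x | φ x b = 1} := by
    intro b hb
    by_contra hcon
    refine hnot ψ hψfam ⟨hψsafe, ?_, ?_⟩
    · rintro B ⟨b', hb', rfl⟩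
      rw [typeII_const Q ℬ m ψ hψm hψb b' hb', typeII_const Q ℬ m φ hφm hφb b' hb', hψT,
        prob_compl_eq_one_sub (hTm _), prob_compl_eq_one_sub (hφsm _)]
      exact mul_le_mul_right (tsub_le_tsub_left (hle b' hb') 1) _
    · refine ⟨_, ⟨b, hb, rfl⟩, ?_⟩
      rw [typeII_const Q ℬ m ψ hψm hψb b hb, typeII_const Q ℬ m φ hφm hφb b hb, hψT,
        prob_compl_eq_one_sub (hTm _), prob_compl_eq_one_sub (hφsm _)]
      refine (ENNReal.mul_lt_mul_iff_right (by simpa using hm b hb) ENNReal.ofReal_ne_top).2 ?_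
      exact (ENNReal.cancel_of_ne (ne_top_of_le_ne_top ENNReal.one_ne_top
        tsub_le_self)).tsub_lt_tsub_left_of_le prob_le_one (not_le.1 hcon)
  have hST : ∀ b ∈ ℬ, {x | ENNReal.ofReal (ℓ b) ≤ E x} =ᵐ[P] T (G (ENNReal.ofReal (ℓ b))) :=
    fun b hb => (hNP _).2 ((hge b hb).trans (measure_mono (hφS b hb)))
  have hφT : ∀ b ∈ ℬ, {x | φ x b = 1} =ᵐ[P] T (G (ENNReal.ofReal (ℓ b))) := by
    intro b hb
    refine Filter.EventuallyEq.trans ?_ (hST b hb)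
    refine hPQ.ae_le (ae_eq_of_subset_of_measure_ge (hφS b hb) ?_ (hφsm b).nullMeasurableSet
      (measure_ne_top _ _))
    exact (hNP _).1.trans (hge b hb)
  constructor
  · obtain ⟨C, hCB, hCc, hC⟩ := countable_detect ℬ ℓ
    have hall : ∀ᵐ x ∂P, ∀ c ∈ C,
        (ENNReal.ofReal (ℓ c) ≤ E x ↔ x ∈ T (G (ENNReal.ofReal (ℓ c)))) :=
      (ae_ball_iff hCc).2 fun c hc => Filter.eventuallyEq_set.1 (hST c (hCB hc))
    refine ⟨_, ae_iff.1 hall, fun x hx y hy hxy => ?_⟩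
    have hx := not_not.1 hx
    have hy := not_not.1 hy
    by_contra hcon
    obtain ⟨b, hb⟩ := lt_iSup_iff.1 (not_le.1 hcon)
    rcases hφb x b b.2 with h | h
    · simp [h] at hb
    · rw [h, mul_one] at hb
      obtain ⟨c, hc, hc1, hc2⟩ := hC b b.2 _ hb
      have h1 : ENNReal.ofReal (ℓ c) ≤ E x :=
        (ENNReal.ofReal_le_ofReal hc2).trans (hφS b b.2 h)
      exact absurd ((hy c hc).2 (hTup _ x y hxy ((hx c hc).1 h1))) (not_le.2 hc1)
  · intro b hb
    refine ⟨_, ae_iff.1 (Filter.eventuallyEq_set.1 (hφT b hb)), fun x hx y hy hxy => ?_⟩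
    have hx := not_not.1 hx
    have hy := not_not.1 hy
    rcases hφb x b hb with h | h
    · rw [h]; exact (hφ01 y b hb).1
    · have : φ y b = 1 := hy.2 (hTup _ x y hxy (hx.1 h))
      rw [h, this]

end PostHocTesting
end

section
/- Assume P and Q are continuous (the distribution of Λ under P is atomless). Let φ be a type-I risk safe binary test family with a decision curve, i.e., φ(x,b) = 1{Λ(x) ≥ t_φ(b)} for an increasing function t_φ : ℬ → [0,∞]. Then φ is 𝐂-inadmissible among binary test families if and only if there exists a type-I risk safe binary test family ψ with a decision curve t_ψ that Q-strictly dominates t_φ, meaning: t_ψ(b) ≤ t_φ(b) for all b ∈ ℬ, and there exists b* ∈ ℬ with t_ψ(b*) < t_φ(b*) and Q({x : t_ψ(b*) ≤ Λ(x) < t_φ(b*)}) > 0. -/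
open MeasureTheory
open scoped ENNReal

namespace PostHocTesting

variable {𝒳 : Type*} [MeasurableSpace 𝒳]

theorem aux_contA (μ : Measure 𝒳) (L : 𝒳 → ℝ≥0∞)
    (hat : ∀ c, μ {x | L x = c} = 0) (i p : ℝ≥0∞)
    (h : ∀ u, i < u → μ {x | u ≤ L x} ≤ p) : μ {x | i ≤ L x} ≤ p := by
  rcases eq_or_ne i ⊤ with rfl | hi
  · simp only [top_le_iff, hat]
    exact zero_le
  obtain ⟨u, hu, hui, hlim⟩ := exists_seq_strictAnti_tendsto' (lt_top_iff_ne_top.2 hi)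
  have hsub : {x | i ≤ L x} ⊆ {x | L x = i} ∪ ⋃ n, {x | u n ≤ L x} := by
    intro x hx
    rcases eq_or_lt_of_le (show i ≤ L x from hx) with h1 | h1
    · exact Or.inl h1.symm
    · right
      obtain ⟨n, hn⟩ := (hlim.eventually (gt_mem_nhds h1)).exists
      exact Set.mem_iUnion.2 ⟨n, hn.le⟩
  have hmono : Monotone fun n => {x | u n ≤ L x} := by
    intro a b hab x hx
    exact (hu.antitone hab).trans hx
  calc μ {x | i ≤ L x} ≤ μ {x | L x = i} + μ (⋃ n, {x | u n ≤ L x}) :=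
        (measure_mono hsub).trans (measure_union_le _ _)
    _ = ⨆ n, μ {x | u n ≤ L x} := by rw [hat, zero_add, hmono.measure_iUnion]
    _ ≤ p := iSup_le fun n => h _ (hui n).1

theorem aux_contB (μ : Measure 𝒳) [IsFiniteMeasure μ] (L : 𝒳 → ℝ≥0∞) (hL : Measurable L)
    (i p : ℝ≥0∞) (hi : 0 < i)
    (h : ∀ u, u < i → p ≤ μ {x | u ≤ L x}) : p ≤ μ {x | i ≤ L x} := by
  obtain ⟨u, hu, hui, hlim⟩ := exists_seq_strictMono_tendsto' hi
  have heq : {x | i ≤ L x} = ⋂ n, {x | u n ≤ L x} := by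
    ext x
    simp only [Set.mem_setOf_eq, Set.mem_iInter]
    exact ⟨fun hx n => (hui n).2.le.trans hx, fun hx => le_of_tendsto' hlim hx⟩
  have hanti : Antitone fun n => {x | u n ≤ L x} := by
    intro a b hab x hx
    exact (hu.monotone hab).trans hx
  rw [heq, hanti.measure_iInter
    (fun n => (measurableSet_le measurable_const hL).nullMeasurableSet)
    ⟨0, measure_ne_top _ _⟩]
  exact le_iInf fun n => h _ (hui n).2

theorem aux_NP (P Q : Measure 𝒳) [IsProbabilityMeasure P] [IsProbabilityMeasure Q]
    (hPQ : P ≪ Q) (L : 𝒳 → ℝ≥0∞) (hL : Measurable L)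
    (hLQ : ∀ S, MeasurableSet S → ∫⁻ x in S, L x ∂P = Q S)
    (hat : ∀ c, P {x | L x = c} = 0)
    (s : ℝ≥0∞) (A : Set 𝒳) (hA : MeasurableSet A)
    (h : Q {x | s ≤ L x} = Q A) : P {x | s ≤ L x} ≤ P A := by
  have hS : MeasurableSet {x | s ≤ L x} := measurableSet_le measurable_const hL
  rcases eq_or_ne s ⊤ with rfl | hs
  · simp only [top_le_iff, hat]
    exact zero_le
  rcases eq_or_ne s 0 with rfl | hs0
  · simp only [zero_le, Set.setOf_true, measure_univ] at h ⊢
    have h1 : Q Aᶜ = 0 := (prob_compl_eq_zero_iff hA).2 h.symm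
    exact ((prob_compl_eq_zero_iff hA).1 (hPQ h1)).ge
  set S := {x | s ≤ L x} with hSdef
  have hdiff : Q (S \ A) = Q (A \ S) := by
    have h1 := measure_sdiff_add_inter (μ := Q) S hA
    have h2 := measure_sdiff_add_inter (μ := Q) A hS
    rw [Set.inter_comm] at h2
    rw [h, ← h2] at h1
    exact (ENNReal.add_left_inj (measure_ne_top _ _)).1 h1
  have hle : P (S \ A) ≤ P (A \ S) := by
    have h1 : s * P (S \ A) ≤ Q (S \ A) := by
      rw [← hLQ _ (hS.diff hA), ← setLIntegral_const]
      exact setLIntegral_mono' (hS.diff hA) fun x hx => hx.1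
    have h2 : Q (A \ S) ≤ s * P (A \ S) := by
      rw [← hLQ _ (hA.diff hS), ← setLIntegral_const]
      exact setLIntegral_mono' (hA.diff hS) fun x hx => (not_le.1 hx.2).le
    have h3 := (h1.trans hdiff.le).trans h2
    exact (ENNReal.mul_le_mul_iff_right hs0 hs).1 h3
  rw [← measure_sdiff_add_inter (μ := P) S hA, ← measure_sdiff_add_inter (μ := P) A hS,
    Set.inter_comm A S]
  gcongr

theorem aux_layer (P : Measure 𝒳) [IsProbabilityMeasure P] (f g : 𝒳 → ℝ≥0∞)
    (hf : Measurable f) (hg : Measurable g) (hg1 : ∫⁻ x, g x ∂P ≤ 1)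
    (h : ∀ c : ℝ≥0∞, P {x | c < f x} ≤ P {x | c < g x}) :
    ∫⁻ x, f x ∂P ≤ ∫⁻ x, g x ∂P := by
  have hgfin : ∀ᵐ x ∂P, g x < ⊤ :=
    ae_lt_top hg (hg1.trans_lt ENNReal.one_lt_top).ne
  have hbd : ∀ n : ℕ, P {x | f x = ⊤} * n ≤ 1 := by
    intro n
    calc P {x | f x = ⊤} * n ≤ P {x | (n : ℝ≥0∞) ≤ g x} * n := by
          refine mul_le_mul_left ?_ _
          refine le_trans (measure_mono ?_) ((h n).trans (measure_mono ?_))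
          · intro x hx
            have : f x = ⊤ := hx
            simp [this]
          · intro x hx
            exact le_of_lt (show (n : ℝ≥0∞) < g x from hx)
      _ ≤ 1 := by
          rw [mul_comm]
          exact (mul_meas_ge_le_lintegral hg n).trans hg1
  have hfz : P {x | f x = ⊤} = 0 := by
    by_contra hne
    obtain ⟨n, hn⟩ := ENNReal.exists_nat_mul_gt hne ENNReal.one_ne_top
    exact absurd (hbd n) (not_le.2 (by rwa [mul_comm]))
  have hffin : ∀ᵐ x ∂P, f x < ⊤ := by
    rw [ae_iff]
    simpa [not_lt, top_le_iff] using hfz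
  have key : ∀ k : 𝒳 → ℝ≥0∞, Measurable k → (∀ᵐ x ∂P, k x < ⊤) →
      ∫⁻ x, k x ∂P = ∫⁻ t in Set.Ioi (0 : ℝ), P {x | ENNReal.ofReal t < k x} := by
    intro k hk hkfin
    have h1 : ∫⁻ x, k x ∂P = ∫⁻ x, ENNReal.ofReal (k x).toReal ∂P := by
      apply lintegral_congr_ae
      filter_upwards [hkfin] with x hx
      rw [ENNReal.ofReal_toReal hx.ne]
    rw [h1, lintegral_eq_lintegral_meas_lt P
      (Filter.Eventually.of_forall fun x => ENNReal.toReal_nonneg) hk.ennreal_toReal.aemeasurable]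
    refine setLIntegral_congr_fun measurableSet_Ioi fun t ht => ?_
    apply measure_congr
    filter_upwards [hkfin] with x hx
    exact propext (ENNReal.ofReal_lt_iff_lt_toReal (le_of_lt ht) hx.ne).symm
  rw [key f hf hffin, key g hg hgfin]
  exact lintegral_mono fun t => h _

theorem aux_typeII (Q : Measure 𝒳) [IsProbabilityMeasure Q] (ℬ : Set ℝ) (ℓ m : ℝ → ℝ)
    (δ : 𝒳 → ℝ → ℝ) (hδ : IsBinaryTestFamily ℬ ℓ δ) (b : ℝ) (hb : b ∈ ℬ) :
    MeasurableSet {x | δ x b = 1} ∧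
    typeIIRisk Q m δ (fun _ => b) = ENNReal.ofReal (m b) * (1 - Q {x | δ x b = 1}) := by
  have hm : Measurable fun x => δ x b := hδ.1.1.comp (measurable_id.prodMk measurable_const)
  have hS : MeasurableSet {x | δ x b = 1} := hm (measurableSet_singleton 1)
  refine ⟨hS, ?_⟩
  rw [← prob_compl_eq_one_sub hS, ← setLIntegral_const, ← lintegral_indicator hS.compl]
  unfold typeIIRisk
  refine lintegral_congr fun x => ?_
  rcases hδ.2 x b hb with h | h <;> simp [h, Set.indicator]

theorem aux_typeII_lt (Q : Measure 𝒳) [IsProbabilityMeasure Q] (ℬ : Set ℝ) (ℓ m : ℝ → ℝ)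
    (hm : ∀ b ∈ ℬ, 0 < m b)
    (δ ε : 𝒳 → ℝ → ℝ) (hδ : IsBinaryTestFamily ℬ ℓ δ) (hε : IsBinaryTestFamily ℬ ℓ ε)
    (b : ℝ) (hb : b ∈ ℬ) :
    typeIIRisk Q m δ (fun _ => b) < typeIIRisk Q m ε (fun _ => b) ↔
      Q {x | ε x b = 1} < Q {x | δ x b = 1} := by
  rw [(aux_typeII Q ℬ ℓ m δ hδ b hb).2, (aux_typeII Q ℬ ℓ m ε hε b hb).2]
  rw [ENNReal.mul_lt_mul_iff_right (by simpa using hm b hb) ENNReal.ofReal_ne_top]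
  have h1 : Q {x | ε x b = 1} ≤ 1 := prob_le_one
  have h2 : Q {x | δ x b = 1} ≤ 1 := prob_le_one
  constructor
  · intro h
    by_contra hc
    exact absurd (tsub_le_tsub_left (not_lt.1 hc) 1) (not_le.2 h)
  · intro h
    by_contra hc
    have := tsub_le_tsub_left (not_lt.1 hc) 1
    rw [ENNReal.sub_sub_cancel ENNReal.one_ne_top h1,
      ENNReal.sub_sub_cancel ENNReal.one_ne_top h2] at this
    exact absurd this (not_le.2 h)

/-- A monotone threshold gives a binary test family. -/
theorem aux_family (ℬ : Set ℝ) (ℓ : ℝ → ℝ) (hℓpos : ∀ b ∈ ℬ, 0 < ℓ b)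
    (L : 𝒳 → ℝ≥0∞) (hL : Measurable L) (T : ℝ → ℝ≥0∞)
    (hT : Monotone T) :
    IsBinaryTestFamily ℬ ℓ (fun x b => if T b ≤ L x then (1 : ℝ) else 0) := by
  refine ⟨⟨?_, ?_, ?_⟩, ?_⟩
  · exact Measurable.ite (measurableSet_le (hT.measurable.comp measurable_snd)
      (hL.comp measurable_fst)) measurable_const measurable_const
  · intro x b _
    dsimp only
    split_ifs <;> simp
  · have hg : Monotone fun l : ℝ≥0∞ =>
        ⨆ b : ℬ, ENNReal.ofReal (ℓ (b : ℝ) * if T b ≤ l then (1 : ℝ) else 0) := by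
      intro l l' hl
      refine iSup_mono fun b => ENNReal.ofReal_le_ofReal ?_
      refine mul_le_mul_of_nonneg_left ?_ (hℓpos b b.2).le
      by_cases h : T b ≤ l
      · simp [h, h.trans hl]
      · simp only [h, if_false]
        split_ifs <;> simp
    exact hg.measurable.comp hL
  · intro x b _
    dsimp only
    split_ifs <;> simp

/-- when the likelihood ratio is atomless under `P`, a type-I risk safe
binary test family `φ` with (increasing) decision curve `tφ` is `𝐂`-inadmissible among
binary families iff there is a type-I risk safe binary family `ψ` whose decision curve
`tψ` `Q`-strictly dominates `tφ`. -/
theorem stmt17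
    [StandardBorelSpace 𝒳]
    (P Q : Measure 𝒳) [IsProbabilityMeasure P] [IsProbabilityMeasure Q]
    (hPQ : P ≪ Q) (hQP : Q ≪ P)
    (ℬ : Set ℝ) (hℬne : ℬ.Nonempty)
    (ℓ : ℝ → ℝ) (hℓmeas : Measurable ℓ) (hℓpos : ∀ b ∈ ℬ, 0 < ℓ b)
    (hℓmono : ∀ b₁ ∈ ℬ, ∀ b₂ ∈ ℬ, b₁ ≤ b₂ → ℓ b₁ ≤ ℓ b₂)
    (hℓgt1 : ∃ b ∈ ℬ, 1 < ℓ b)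
    (m : ℝ → ℝ) (hm : ∀ b ∈ ℬ, 0 < m b)
    (hcont : AtomlessLR P Q)
    (φ : 𝒳 → ℝ → ℝ) (hφ : IsBinaryTestFamily ℬ ℓ φ) (hφsafe : RiskSafe P ℬ ℓ φ)
    (tφ : ℝ → ℝ≥0∞)
    (htφmono : ∀ b₁ ∈ ℬ, ∀ b₂ ∈ ℬ, b₁ ≤ b₂ → tφ b₁ ≤ tφ b₂)
    (hφform : ∀ x, ∀ b ∈ ℬ,
      φ x b = if tφ b ≤ ENNReal.ofReal (LR P Q x) then (1 : ℝ) else 0) :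
    (¬ AdmissibleBinary P Q ℬ ℓ m (ConstAdv 𝒳 ℬ) φ ↔
      ∃ (ψ : 𝒳 → ℝ → ℝ) (tψ : ℝ → ℝ≥0∞),
        IsBinaryTestFamily ℬ ℓ ψ ∧ RiskSafe P ℬ ℓ ψ ∧
        (∀ b₁ ∈ ℬ, ∀ b₂ ∈ ℬ, b₁ ≤ b₂ → tψ b₁ ≤ tψ b₂) ∧
        (∀ x, ∀ b ∈ ℬ,
          ψ x b = if tψ b ≤ ENNReal.ofReal (LR P Q x) then (1 : ℝ) else 0) ∧
        (∀ b ∈ ℬ, tψ b ≤ tφ b) ∧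
        ∃ bstar ∈ ℬ, tψ bstar < tφ bstar ∧
          0 < Q {x | tψ bstar ≤ ENNReal.ofReal (LR P Q x) ∧
                     ENNReal.ofReal (LR P Q x) < tφ bstar}) := by
  classical
  set L : 𝒳 → ℝ≥0∞ := fun x => ENNReal.ofReal (LR P Q x) with hLdef
  have hL : Measurable L :=
    (Measure.measurable_rnDeriv Q P).ennreal_toReal.ennreal_ofReal
  have hatP : ∀ c, P {x | L x = c} = 0 := by
    intro c
    refine measure_mono_null ?_ (hcont c.toReal)
    intro x hx
    have hx' : ENNReal.ofReal (LR P Q x) = c := hx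
    have h0 : 0 ≤ LR P Q x := ENNReal.toReal_nonneg
    show LR P Q x = c.toReal
    rw [← hx', ENNReal.toReal_ofReal h0]
  have hatQ : ∀ c, Q {x | L x = c} = 0 := fun c => hQP (hatP c)
  have hLQ : ∀ S, MeasurableSet S → ∫⁻ x in S, L x ∂P = Q S := by
    intro S hS
    rw [← Measure.setLIntegral_rnDeriv hQP S]
    apply lintegral_congr_ae
    refine ae_restrict_of_ae ?_
    filter_upwards [Measure.rnDeriv_lt_top Q P] with x hx
    exact ENNReal.ofReal_toReal hx.ne
  have hone : ∀ (δ : 𝒳 → ℝ → ℝ) (t : ℝ → ℝ≥0∞),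
      (∀ x, ∀ b ∈ ℬ, δ x b = if t b ≤ L x then (1 : ℝ) else 0) →
      ∀ b ∈ ℬ, {x | δ x b = 1} = {x | t b ≤ L x} := by
    intro δ t h b hb
    ext x
    simp only [Set.mem_setOf_eq, h x b hb]
    split_ifs with h1 <;> simp [h1]
  have hmS : ∀ t : ℝ≥0∞, MeasurableSet {x | t ≤ L x} := fun t =>
    measurableSet_le measurable_const hL
  have hsplit : ∀ s t : ℝ≥0∞, s ≤ t →
      Q {x | s ≤ L x} = Q {x | s ≤ L x ∧ L x < t} + Q {x | t ≤ L x} := by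
    intro s t hst
    rw [← measure_union _ (hmS t)]
    · congr 1
      ext x
      simp only [Set.mem_setOf_eq, Set.mem_union]
      constructor
      · intro h
        rcases lt_or_ge (L x) t with h1 | h1
        · exact Or.inl ⟨h, h1⟩
        · exact Or.inr h1
      · rintro (h | h)
        · exact h.1
        · exact hst.trans h
    · rw [Set.disjoint_left]
      intro x hx hx'
      exact absurd hx.2 (not_lt.2 hx')
  constructor
  · intro hna
    have hna' : ∃ ψ, IsBinaryTestFamily ℬ ℓ ψ ∧
        StrictlyPreferable P Q ℬ ℓ m (ConstAdv 𝒳 ℬ) ψ φ := by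
      by_contra hc
      exact hna ⟨hφsafe, fun ψ hψ hs => hc ⟨ψ, hψ, hs⟩⟩
    obtain ⟨ψ, hψ, hψsafe, hψle, B, ⟨b₀, hb₀, rfl⟩, hψlt⟩ := hna'
    set E := Esup ℬ ℓ ψ with hE
    have hEm : Measurable E := hψ.1.2.2
    let A : ℝ → Set 𝒳 := fun b => {x | ENNReal.ofReal (ℓ b) ≤ E x}
    have hA : ∀ b, MeasurableSet (A b) := fun b => measurableSet_le measurable_const hEm
    have hψA : ∀ b ∈ ℬ, {x | ψ x b = 1} ⊆ A b := by
      intro b hb x hx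
      have hx' : ψ x b = 1 := hx
      show ENNReal.ofReal (ℓ b) ≤ ⨆ b : ℬ, ENNReal.ofReal (ℓ (b : ℝ) * ψ x (b : ℝ))
      refine le_iSup_of_le ⟨b, hb⟩ ?_
      simp [hx']
    have hAmono : ∀ b₁ ∈ ℬ, ∀ b₂ ∈ ℬ, b₁ ≤ b₂ → A b₂ ⊆ A b₁ := by
      intro b₁ h₁ b₂ h₂ h x hx
      exact (ENNReal.ofReal_le_ofReal (hℓmono b₁ h₁ b₂ h₂ h)).trans hx
    let s : ℝ → ℝ≥0∞ := fun b => sInf {t | Q {x | t ≤ L x} ≤ Q (A b)}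
    have hsQ : ∀ b, Q {x | s b ≤ L x} = Q (A b) := by
      intro b
      apply le_antisymm
      · apply aux_contA Q L hatQ
        intro u hu
        obtain ⟨t, ht, htu⟩ := sInf_lt_iff.1 hu
        exact (measure_mono fun x hx => htu.le.trans hx).trans ht
      · rcases eq_or_ne (s b) 0 with h0 | h0
        · rw [h0]
          simpa using prob_le_one
        · refine aux_contB Q L hL _ _ (pos_iff_ne_zero.2 h0) ?_
          intro u hu
          by_contra hc
          exact absurd (sInf_le (show u ∈ {t | Q {x | t ≤ L x} ≤ Q (A b)} from
            (not_le.1 hc).le)) (not_le.2 hu)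
    have hsmono : ∀ b₁ ∈ ℬ, ∀ b₂ ∈ ℬ, b₁ ≤ b₂ → s b₁ ≤ s b₂ := by
      intro b₁ h₁ b₂ h₂ h
      exact sInf_le_sInf fun t ht => le_trans ht (measure_mono (hAmono b₁ h₁ b₂ h₂ h))
    have hsle : ∀ b ∈ ℬ, s b ≤ tφ b := by
      intro b hb
      apply sInf_le
      show Q {x | tφ b ≤ L x} ≤ Q (A b)
      rw [← hone φ tφ hφform b hb]
      refine le_trans ?_ (measure_mono (hψA b hb))
      have h1 := hψle _ ⟨b, hb, rfl⟩
      by_contra hc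
      exact absurd ((aux_typeII_lt Q ℬ ℓ m hm φ ψ hφ hψ b hb).2 (not_le.1 hc)) (not_lt.2 h1)
    let T : ℝ → ℝ≥0∞ := fun b => ⨆ c : {c : ℬ // (c : ℝ) ≤ b}, s c.1
    have hTmono : Monotone T := by
      intro a b hab
      refine iSup_le fun c => ?_
      exact le_iSup (fun c : {c : ℬ // (c : ℝ) ≤ b} => s c.1) ⟨c.1, c.2.trans hab⟩
    have hTs : ∀ b ∈ ℬ, T b = s b := by
      intro b hb
      apply le_antisymm
      · exact iSup_le fun c => hsmono _ c.1.2 _ hb c.2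
      · exact le_iSup (fun c : {c : ℬ // (c : ℝ) ≤ b} => s c.1) ⟨⟨b, hb⟩, le_rfl⟩
    have hfam := aux_family ℬ ℓ hℓpos L hL T hTmono
    refine ⟨fun x b => if T b ≤ L x then (1 : ℝ) else 0, T, hfam, ?_, fun b₁ _ b₂ _ h => hTmono h,
      fun x b _ => rfl, fun b hb => (hTs b hb).le.trans (hsle b hb), b₀, hb₀, ?_⟩
    · refine le_trans (aux_layer P _ E hfam.1.2.2 hEm hψsafe ?_) hψsafe
      intro c
      let i : ℝ≥0∞ := sInf {t | ∃ b ∈ ℬ, c < ENNReal.ofReal (ℓ b) ∧ t = s b}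
      refine le_trans (measure_mono (t := {x | i ≤ L x}) ?_) ?_
      · intro x hx
        obtain ⟨b, hb⟩ := lt_iSup_iff.1 (show c < ⨆ b : ℬ, ENNReal.ofReal
          (ℓ (b : ℝ) * if T b ≤ L x then (1 : ℝ) else 0) from hx)
        by_cases h : T b ≤ L x
        · rw [if_pos h, mul_one] at hb
          rw [hTs b b.2] at h
          exact (sInf_le ⟨b, b.2, hb, rfl⟩ : i ≤ s b).trans h
        · simp [h] at hb
      · apply aux_contA P L hatP
        intro u hu
        obtain ⟨t, ⟨b, hb, hcb, rfl⟩, htu⟩ := sInf_lt_iff.1 hu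
        calc P {x | u ≤ L x} ≤ P {x | s b ≤ L x} := measure_mono fun x hx => htu.le.trans hx
          _ ≤ P (A b) := aux_NP P Q hPQ L hL hLQ hatP _ _ (hA b) (hsQ b)
          _ ≤ P {x | c < E x} := measure_mono fun x hx => lt_of_lt_of_le hcb hx
    · have hlt := (aux_typeII_lt Q ℬ ℓ m hm ψ φ hψ hφ b₀ hb₀).1 hψlt
      rw [hone φ tφ hφform b₀ hb₀] at hlt
      have hlt2 : Q {x | tφ b₀ ≤ L x} < Q {x | s b₀ ≤ L x} := by
        rw [hsQ]
        exact hlt.trans_le (measure_mono (hψA b₀ hb₀))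
      rw [hTs b₀ hb₀]
      refine ⟨lt_of_le_of_ne (hsle b₀ hb₀) fun h => ?_, pos_iff_ne_zero.2 fun h => ?_⟩
      · rw [h] at hlt2
        exact lt_irrefl _ hlt2
      · have h1 := hsplit _ _ (hsle b₀ hb₀)
        have h' : Q {x | s b₀ ≤ L x ∧ L x < tφ b₀} = 0 := h
        rw [h', zero_add] at h1
        exact hlt2.ne' h1
  · rintro ⟨ψ, tψ, hψ, hψsafe, -, hψform, hle, b₀, hb₀, -, hpos⟩ hadm
    refine hadm.2 ψ hψ ⟨hψsafe, ?_, _, ⟨b₀, hb₀, rfl⟩, ?_⟩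
    · rintro B ⟨b, hb, rfl⟩
      rw [← not_lt, aux_typeII_lt Q ℬ ℓ m hm φ ψ hφ hψ b hb, not_lt, hone φ tφ hφform b hb,
        hone ψ tψ hψform b hb]
      exact measure_mono fun x hx => (hle b hb).trans hx
    · rw [aux_typeII_lt Q ℬ ℓ m hm ψ φ hψ hφ b₀ hb₀, hone φ tφ hφform b₀ hb₀,
        hone ψ tψ hψform b₀ hb₀, hsplit _ _ (hle b₀ hb₀), add_comm]
      exact ENNReal.lt_add_right (measure_ne_top _ _) hpos.ne'

end PostHocTesting
end

section
/- Assume P and Q are continuous (the distribution of Λ under P is atomless). Let φ be a type-I risk safe binary test family with decision curve t, i.e., φ(x,b) = 1{Λ(x) ≥ t(b)} with t : ℬ → [0,∞] increasing. If φ is 𝐂-admissible among binary test families, then t is minimal: for every b* ∈ ℬ such that sup_{b<b*} ℓ(b) = ℓ(b*), either sup_{b<b*} t(b) = t(b*) or P({x : sup_{b<b*} t(b) ≤ Λ(x) < t(b*)}) = 0. -/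
open MeasureTheory
open scoped ENNReal

namespace PostHocTesting

variable {𝒳 : Type*} [MeasurableSpace 𝒳]

/-- when the likelihood ratio is atomless under `P`, the decision curve of
a `𝐂`-admissible type-I risk safe binary test family is minimal: whenever
`sup_{b<b*} ℓ(b) = ℓ(b*)`, either `sup_{b<b*} t(b) = t(b*)` or
`P(sup_{b<b*} t(b) ≤ Λ < t(b*)) = 0`. -/
theorem stmt18
    [StandardBorelSpace 𝒳]
    (P Q : Measure 𝒳) [IsProbabilityMeasure P] [IsProbabilityMeasure Q]
    (hPQ : P ≪ Q) (hQP : Q ≪ P)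
    (ℬ : Set ℝ) (hℬne : ℬ.Nonempty)
    (ℓ : ℝ → ℝ) (hℓmeas : Measurable ℓ) (hℓpos : ∀ b ∈ ℬ, 0 < ℓ b)
    (hℓmono : ∀ b₁ ∈ ℬ, ∀ b₂ ∈ ℬ, b₁ ≤ b₂ → ℓ b₁ ≤ ℓ b₂)
    (hℓgt1 : ∃ b ∈ ℬ, 1 < ℓ b)
    (m : ℝ → ℝ) (hm : ∀ b ∈ ℬ, 0 < m b)
    (hcont : AtomlessLR P Q)
    (φ : 𝒳 → ℝ → ℝ) (hφ : IsBinaryTestFamily ℬ ℓ φ) (hφsafe : RiskSafe P ℬ ℓ φ)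
    (t : ℝ → ℝ≥0∞)
    (htmono : ∀ b₁ ∈ ℬ, ∀ b₂ ∈ ℬ, b₁ ≤ b₂ → t b₁ ≤ t b₂)
    (hφform : ∀ x, ∀ b ∈ ℬ,
      φ x b = if t b ≤ ENNReal.ofReal (LR P Q x) then (1 : ℝ) else 0)
    (hadm : AdmissibleBinary P Q ℬ ℓ m (ConstAdv 𝒳 ℬ) φ) :
    ∀ bstar ∈ ℬ, sSup (ℓ '' {b ∈ ℬ | b < bstar}) = ℓ bstar →
      ((⨆ b ∈ {c ∈ ℬ | c < bstar}, t b) = t bstar ∨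
        P {x | (⨆ b ∈ {c ∈ ℬ | c < bstar}, t b) ≤ ENNReal.ofReal (LR P Q x) ∧
               ENNReal.ofReal (LR P Q x) < t bstar} = 0) := by
  intro bs hbs hsup
  set S : ℝ≥0∞ := ⨆ b ∈ {c ∈ ℬ | c < bs}, t b with hS
  right
  by_contra hP
  classical
  have hSt : S ≤ t bs := iSup₂_le fun b hb => htmono b hb.1 bs hbs hb.2.le
  have hLR : Measurable fun x => ENNReal.ofReal (LR P Q x) :=
    (Measure.measurable_rnDeriv Q P).ennreal_toReal.ennreal_ofReal
  have hAm : MeasurableSet {x : 𝒳 | S ≤ ENNReal.ofReal (LR P Q x)} :=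
    measurableSet_le measurable_const hLR
  let ψ : 𝒳 → ℝ → ℝ := fun x b =>
    if b = bs then (if S ≤ ENNReal.ofReal (LR P Q x) then (1 : ℝ) else 0) else φ x b
  have hψs : ∀ x, ψ x bs = if S ≤ ENNReal.ofReal (LR P Q x) then (1 : ℝ) else 0 := by
    intro x; simp [ψ]
  have hψn : ∀ x b, b ≠ bs → ψ x b = φ x b := by
    intro x b hb; simp [ψ, hb]
  have hle : ∀ x, ∀ b ∈ ℬ, φ x b ≤ ψ x b := by
    intro x b hb
    by_cases h : b = bs
    · subst h
      rw [hψs, hφform x b hb]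
      by_cases h1 : t b ≤ ENNReal.ofReal (LR P Q x)
      · rw [if_pos h1, if_pos (hSt.trans h1)]
      · rw [if_neg h1]; split_ifs <;> norm_num
    · rw [hψn x b h]
  have hE : Esup ℬ ℓ ψ = Esup ℬ ℓ φ := by
    funext x
    apply le_antisymm
    · refine iSup_le ?_
      rintro ⟨b, hb⟩
      by_cases h : b = bs
      · subst h
        simp only [hψs]
        by_cases h1 : S ≤ ENNReal.ofReal (LR P Q x)
        · rw [if_pos h1, mul_one]
          refine le_of_forall_lt fun c hc => ?_
          have hc' : c.toReal < ℓ b := by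
            have := (ENNReal.lt_ofReal_iff_toReal_lt hc.ne_top).1 hc
            exact this
          have hne : (ℓ '' {c ∈ ℬ | c < b}).Nonempty := by
            by_contra hem
            rw [Set.not_nonempty_iff_eq_empty] at hem
            rw [hem, Real.sSup_empty] at hsup
            exact absurd (hℓpos b hb) (by rw [← hsup]; exact lt_irrefl _)
          rw [← hsup] at hc'
          obtain ⟨_, ⟨d, hd, rfl⟩, hcd⟩ := exists_lt_of_lt_csSup hne hc'
          have hdt : t d ≤ ENNReal.ofReal (LR P Q x) :=
            (le_iSup₂ (f := fun a (_ : a ∈ {c ∈ ℬ | c < b}) => t a) d hd).trans h1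
          have h2 : c < ENNReal.ofReal (ℓ d * φ x d) := by
            rw [hφform x d hd.1, if_pos hdt, mul_one]
            exact (ENNReal.lt_ofReal_iff_toReal_lt hc.ne_top).2 hcd
          exact h2.trans_le (le_iSup (fun b : ℬ => ENNReal.ofReal (ℓ (b : ℝ) * φ x (b : ℝ))) ⟨d, hd.1⟩)
        · rw [if_neg h1]; simp
      · simp only [hψn x b h]
        exact le_iSup (fun b : ℬ => ENNReal.ofReal (ℓ (b : ℝ) * φ x (b : ℝ))) ⟨b, hb⟩
    · refine iSup_mono ?_
      rintro ⟨b, hb⟩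
      exact ENNReal.ofReal_le_ofReal (mul_le_mul_of_nonneg_left (hle x b hb) (hℓpos b hb).le)
  have hbin : ∀ x, ∀ b ∈ ℬ, ψ x b = 0 ∨ ψ x b = 1 := by
    intro x b hb
    by_cases h : b = bs
    · subst h
      rw [hψs]; split_ifs <;> simp
    · rw [hψn x b h]; exact hφ.2 x b hb
  have hψ : IsBinaryTestFamily ℬ ℓ ψ := by
    refine ⟨⟨?_, ?_, ?_⟩, hbin⟩
    · refine Measurable.ite (measurable_snd (measurableSet_singleton bs)) ?_ hφ.1.1
      exact Measurable.ite (measurable_fst hAm) measurable_const measurable_const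
    · intro x b hb
      rcases hbin x b hb with h | h <;> rw [h] <;> simp
    · rw [hE]; exact hφ.1.2.2
  refine hadm.2 ψ hψ ⟨?_, ?_, ?_⟩
  · unfold RiskSafe typeIRisk
    rw [hE]; exact hφsafe
  · rintro B ⟨b, hb, rfl⟩
    refine lintegral_mono fun x => ENNReal.ofReal_le_ofReal ?_
    exact mul_le_mul_of_nonneg_left (by linarith [hle x b hb]) (hm b hb).le
  · refine ⟨fun _ => bs, ⟨bs, hbs, rfl⟩, ?_⟩
    have hφm : Measurable fun x => φ x bs :=
      hφ.1.1.comp (measurable_id.prodMk measurable_const)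
    refine lintegral_strict_mono_of_ae_le_of_frequently_ae_lt ?_ ?_ ?_ ?_
    · exact ((measurable_const.sub hφm).const_mul _).ennreal_ofReal.aemeasurable
    · refine ne_top_of_le_ne_top (b := ∫⁻ _, ENNReal.ofReal (m bs) ∂Q) (by simp) ?_
      refine lintegral_mono fun x => ENNReal.ofReal_le_ofReal ?_
      rcases hbin x bs hbs with h | h <;> simp [h, (hm bs hbs).le]
    · refine Filter.Eventually.of_forall fun x => ENNReal.ofReal_le_ofReal ?_
      exact mul_le_mul_of_nonneg_left (by linarith [hle x bs hbs]) (hm bs hbs).le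
    · intro hnot
      apply hP
      apply hPQ
      refine measure_mono_null ?_ hnot
      rintro x ⟨h1, h2⟩
      simp only [Set.mem_compl_iff, Set.mem_ofPred_eq, not_not]
      rw [hψs, if_pos h1, hφform x bs hbs, if_neg (not_le.2 h2)]
      simp [hm bs hbs]

end PostHocTesting
end
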